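/- arXiv:2002.09294 — 3 statements merged into one kernel-verified Lean document; each statement's English description precedes it below -/
import Mathlib

section
/- Let X be a standard Borel space, E a countable Borel equivalence relation on X, and ρ : E → (0,∞) an aperiodic smooth Borel cocycle. Then there is a finite Borel subequivalence relation F of E for which there is a strictly (ρ/F)-increasing Borel injection of X/F into X/F. -/
open MeasureTheory Set ENNReal

namespace CocycleNadkarni

variable {X : Type*} {Γ : Type*}

/-- The `ρ`-size of `Y` relative to the point `z`: `∑_{y ∈ Y} ρ(y, z)`. -/
noncomputable def eSize (ρ : X → X → ℝ) (Y : Set X) (z : X) : ℝ≥0∞ :=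
  ∑' y : Y, ENNReal.ofReal (ρ y z)

/-- The `ρ`-size of `Y` relative to the set `Z`, computed at the point `z`. -/
noncomputable def relSize (ρ : X → X → ℝ) (Y Z : Set X) (z : X) : ℝ≥0∞ :=
  eSize ρ Y z / eSize ρ Z z

/-- Real-valued `ρ`-size (used for finite sets). -/
noncomputable def rSize (ρ : X → X → ℝ) (Y : Set X) (z : X) : ℝ :=
  ∑' y : Y, ρ y z

/-- `∫_C f dμ^ρ_S`, computed at the point `z`. -/
noncomputable def avgOn (ρ : X → X → ℝ) (f : X → ℝ) (S C : Set X) (z : X) : ℝ :=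
  (∑' y : ↥(S ∩ C), f y * ρ y z) / rSize ρ S z

/-- countable Borel equivalence relation -/
def IsCBER [MeasurableSpace X] (E : X → X → Prop) : Prop :=
  Equivalence E ∧ MeasurableSet {p : X × X | E p.1 p.2} ∧ ∀ x : X, {y | E x y}.Countable

/-- Borel cocycle `ρ : E → (0, ∞)` (as a total function whose values off `E` are irrelevant). -/
def IsCocycle [MeasurableSpace X] (E : X → X → Prop) (ρ : X → X → ℝ) : Prop :=
  Measurable (fun p : X × X => ρ p.1 p.2) ∧
    (∀ ⦃x y : X⦄, E x y → 0 < ρ x y) ∧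
    ∀ ⦃x y z : X⦄, E x y → E y z → ρ x z = ρ x y * ρ y z

/-- Borel cocycle into a group `Γ`. -/
def IsGrpCocycle [MeasurableSpace X] [Group Γ] [MeasurableSpace Γ]
    (E : X → X → Prop) (ρ : X → X → Γ) : Prop :=
  Measurable (fun p : X × X => ρ p.1 p.2) ∧
    ∀ ⦃x y z : X⦄, E x y → E y z → ρ x z = ρ x y * ρ y z

/-- finite Borel subequivalence relation of `E` -/
def IsFinSubequiv [MeasurableSpace X] (E F : X → X → Prop) : Prop :=
  Equivalence F ∧ MeasurableSet {p : X × X | F p.1 p.2} ∧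
    (∀ ⦃x y : X⦄, F x y → E x y) ∧ ∀ x : X, {y | F x y}.Finite

/-- finite Borel subequivalence relation of `E` restricted to `W` (extended by the diagonal). -/
def IsFinSubequivOn [MeasurableSpace X] (E : X → X → Prop) (W : Set X)
    (F : X → X → Prop) : Prop :=
  Equivalence F ∧ MeasurableSet {p : X × X | F p.1 p.2} ∧
    (∀ ⦃x y : X⦄, F x y → x = y ∨ (E x y ∧ x ∈ W ∧ y ∈ W)) ∧ ∀ x : X, {y | F x y}.Finite

/-- `ρ`-invariance of a Borel measure. -/
def IsInvariant [MeasurableSpace X] (E : X → X → Prop) (ρ : X → X → ℝ)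
    (μ : Measure X) : Prop :=
  ∀ T : X ≃ᵐ X, (∀ x, E (T x) x) → ∀ B : Set X, MeasurableSet B →
    μ (T '' B) = ∫⁻ x in B, ENNReal.ofReal (ρ (T x) x) ∂μ

/-- invariance w.r.t. the restriction of `ρ` to a set `R` of pairs, via Borel injections
whose graphs are contained in `R⁻¹`. -/
def IsInvariantRel [MeasurableSpace X] (R : Set (X × X)) (ρ : X → X → ℝ)
    (μ : Measure X) : Prop :=
  ∀ (B : Set X) (T : X → X), MeasurableSet B → Measurable T → Set.InjOn T B →
    (∀ x ∈ B, ((T x, x) : X × X) ∈ R) →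
    μ (T '' B) = ∫⁻ x in B, ENNReal.ofReal (ρ (T x) x) ∂μ

/-- a Borel ℕ-coloring of the lacunarity digraph `G^ρ_Z`. -/
def HasColoring [MeasurableSpace X] (E : X → X → Prop) (ρ : X → X → Γ)
    (Z : Set Γ) : Prop :=
  ∃ c : X → ℕ, Measurable c ∧
    ∀ ⦃x y : X⦄, x ≠ y → E x y → ρ x y ∈ Z → c x ≠ c y

/-- smoothness of the cocycle `ρ` restricted to `E` restricted to `W`. -/
def SmoothOn [MeasurableSpace X] (E : X → X → Prop) (ρ : X → X → ℝ)
    (W : Set X) : Prop :=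
  ∃ U : Set ℝ, IsOpen U ∧ (1:ℝ) ∈ U ∧ U ⊆ Set.Ioi 0 ∧
    ∃ c : X → ℕ, Measurable c ∧
      ∀ ⦃x y : X⦄, x ∈ W → y ∈ W → x ≠ y → E x y → ρ x y ∈ U → c x ≠ c y

/-- smoothness of the cocycle `ρ` on `E`. -/
def Smooth [MeasurableSpace X] (E : X → X → Prop) (ρ : X → X → ℝ) : Prop :=
  SmoothOn E ρ Set.univ

/-- `E`-invariance of a set. -/
def EInvariant (E : X → X → Prop) (B : Set X) : Prop :=
  ∀ ⦃x y : X⦄, E x y → x ∈ B → y ∈ B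

/-- a compression of `ρ` over the finite subequivalence relation `F` of `E`. -/
def CompressionOver [MeasurableSpace X] (E F : X → X → Prop) (ρ : X → X → ℝ)
    (φ : X → X) : Prop :=
  (∀ x, E x (φ x)) ∧
  (∀ x : X, relSize ρ (φ ⁻¹' {y | F y x}) {y | F y x} x ≤ 1) ∧
  (∀ x : X, ∃ y, E x y ∧ relSize ρ (φ ⁻¹' {z | F z y}) {z | F z y} y < 1)

/-- a compression of the quotient of `ρ | E | W` by the finite subequivalence relation given
by the setoid `s`, expressed via representatives. -/
def QuotCompressionOn [MeasurableSpace X] (E : X → X → Prop) (ρ : X → X → ℝ)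
    (W : Set X) (s : Setoid X) (φ : Quotient s → Quotient s) : Prop :=
  (∀ ⦃x : X⦄, x ∈ W → ∀ y : X, φ (Quotient.mk s x) = Quotient.mk s y → (E x y ∧ y ∈ W)) ∧
  (∀ ⦃x : X⦄, x ∈ W →
    relSize ρ {y | y ∈ W ∧ φ (Quotient.mk s y) = Quotient.mk s x} {y | s.r y x} x ≤ 1) ∧
  (∀ ⦃x : X⦄, x ∈ W → ∃ y, y ∈ W ∧ E x y ∧
    relSize ρ {z | z ∈ W ∧ φ (Quotient.mk s z) = Quotient.mk s y} {z | s.r z y} y < 1)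


/-- `B` has `ρ`-density at least `ε` relative to `W`. -/
def HasDensityAtLeastOn [MeasurableSpace X] (E : X → X → Prop) (ρ : X → X → ℝ)
    (B W : Set X) (ε : ℝ) : Prop :=
  ∃ F : X → X → Prop, IsFinSubequivOn E W F ∧
    ∀ x ∈ W, ENNReal.ofReal ε ≤ relSize ρ (B ∩ {y | F y x}) {y | F y x} x

/-- `B` has positive `ρ`-density relative to `W`. -/
def HasPosDensityOn [MeasurableSpace X] (E : X → X → Prop) (ρ : X → X → ℝ)
    (B W : Set X) : Prop :=
  ∃ ε : ℝ, 0 < ε ∧ HasDensityAtLeastOn E ρ B W ε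

/-- `B` has σ-positive `ρ`-density relative to `W`. -/
def HasSigmaPosDensityOn [MeasurableSpace X] (E : X → X → Prop) (ρ : X → X → ℝ)
    (B W : Set X) : Prop :=
  ∃ A : ℕ → Set X, (∀ n, MeasurableSet (A n)) ∧ (∀ n, A n ⊆ W) ∧
    (∀ n, ∀ x ∈ A n, ∀ y ∈ W, E x y → y ∈ A n) ∧ W = ⋃ n, A n ∧
    ∀ n, HasPosDensityOn E ρ (B ∩ A n) (A n)

/-!
Smoothness yields a Borel coloring such that the values of `log ρ` at distinct points of the same
color in one class are separated by some `δ > 0`. Two cases arise, depending on the class.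

If no color class within it has a `ρ`-largest point, every point has a `ρ`-successor of its own
color. Passing to the successor is injective and strictly increases `ρ`, so `F` can be equality.

Otherwise the `ρ`-largest point of the least color having one is a Borel choice of a point in the
class. Together with the codes formed from the color and the level of `log ρ`, it enumerates the
class, which is then cut greedily into finite blocks, each of larger `ρ`-size than the previous
one. Aperiodicity guarantees that the next block can always be completed. Moving each block to the
next one is strictly increasing for `ρ / F`, where `F` is the partition into blocks.
-/

lemma measurable_sInf_nat {α : Type*} [MeasurableSpace α] {p : α → ℕ → Prop}
    (hp : ∀ n, MeasurableSet {x | p x n}) : Measurable fun x => sInf {n | p x n} := by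
  classical
  have hex : ∀ x, ∃ n, p x n ∨ ∀ m, ¬ p x m := fun x => by
    by_cases h : ∃ n, p x n
    · exact h.imp fun _ => Or.inl
    · exact ⟨0, Or.inr (not_exists.1 h)⟩
  have hfind : ∀ x, sInf {n | p x n} = Nat.find (hex x) := fun x => by
    by_cases h : ∃ n, p x n
    · have hnot : ¬ ∀ m, ¬ p x m := not_forall_not.2 h
      simp only [hnot, or_false]
      exact Nat.sInf_def h
    · have hzero : Nat.find (hex x) = 0 := (Nat.find_eq_zero _).2 (Or.inr (not_exists.1 h))
      have hempty : {n | p x n} = ∅ := eq_empty_of_forall_notMem (not_exists.1 h)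
      rw [hzero, hempty, Nat.sInf_empty]
  simp only [hfind]
  have hnone : MeasurableSet {x | ∀ m, ¬ p x m} := by
    have hInter : {x | ∀ m, ¬ p x m} = ⋂ m, {x | p x m}ᶜ := by ext x; simp
    rw [hInter]
    exact MeasurableSet.iInter fun m => (hp m).compl
  exact measurable_find hex fun n => (hp n).union hnone

section GreedyPartition

lemma exists_lt_sum_Ico {a : ℕ → ℝ≥0∞} (ha : ∀ k, a k ≠ ⊤) (hsum : ∑' k, a k = ⊤)
    {w : ℝ≥0∞} (hw : w ≠ ⊤) (n : ℕ) : ∃ m, w < ∑ k ∈ Finset.Ico n m, a k := by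
  have htop : ∑ k ∈ Finset.range n, a k + w < ∑' k, a k := by
    simpa [hsum] using ⟨fun k _ => (ha k).lt_top, hw.lt_top⟩
  rw [ENNReal.tsum_eq_iSup_nat, lt_iSup_iff] at htop
  obtain ⟨m, hm⟩ := htop
  refine ⟨m, lt_of_add_lt_add_left (hm.trans_le ?_)⟩
  rcases le_total n m with h | h
  · exact (Finset.sum_range_add_sum_Ico a h).ge
  · exact (Finset.sum_le_sum_of_subset (Finset.range_mono h)).trans le_self_add

/-- Left end of the `i`-th interval of the greedy partition of `ℕ` for the weights `a`: each
interval is the shortest one that is heavier than its predecessor. Since `0 - 1 = 0`, the `0`-th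
interval is compared with an empty one. -/
noncomputable def greedyCut (a : ℕ → ℝ≥0∞) : ℕ → ℕ
  | 0 => 0
  | i + 1 => sInf {m | ∑ k ∈ Finset.Ico (greedyCut a (i - 1)) (greedyCut a i), a k <
      ∑ k ∈ Finset.Ico (greedyCut a i) m, a k}

/-- Index of the interval of the greedy partition for the weights `a` that contains `k`. -/
noncomputable def greedyIndex (a : ℕ → ℝ≥0∞) (k : ℕ) : ℕ :=
  sInf {i | k < greedyCut a (i + 1)}

lemma measurable_greedyCut (i : ℕ) : Measurable fun a => greedyCut a i := by
  have hsum : Measurable fun q : (ℕ × ℕ) × (ℕ → ℝ≥0∞) =>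
      ∑ k ∈ Finset.Ico q.1.1 q.1.2, q.2 k :=
    measurable_from_prod_countable_right fun q =>
      Finset.measurable_fun_sum (Finset.Ico q.1 q.2) fun k _ => measurable_pi_apply k
  induction i using Nat.strong_induction_on with
  | _ i ih =>
    cases i with
    | zero => simp only [greedyCut, measurable_const]
    | succ i =>
      simp only [greedyCut]
      have hi := ih i i.lt_succ_self
      have hi' := ih (i - 1) (by lia)
      exact measurable_sInf_nat fun m => measurableSet_lt
        (hsum.comp ((hi'.prodMk hi).prodMk measurable_id))
        (hsum.comp ((hi.prodMk measurable_const).prodMk measurable_id))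

lemma measurable_greedyIndex : Measurable fun q : (ℕ → ℝ≥0∞) × ℕ => greedyIndex q.1 q.2 :=
  measurable_from_prod_countable_left fun _ =>
    measurable_sInf_nat fun i => measurableSet_lt measurable_const (measurable_greedyCut (i + 1))

variable {a : ℕ → ℝ≥0∞}

lemma sum_Ico_greedyCut_lt (ha : ∀ k, a k ≠ ⊤) (hsum : ∑' k, a k = ⊤) (i : ℕ) :
    ∑ k ∈ Finset.Ico (greedyCut a (i - 1)) (greedyCut a i), a k <
      ∑ k ∈ Finset.Ico (greedyCut a i) (greedyCut a (i + 1)), a k := by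
  rw [greedyCut.eq_2 a i]
  exact Nat.sInf_mem (exists_lt_sum_Ico ha hsum (ENNReal.sum_ne_top.2 fun k _ => ha k) _)

lemma greedyCut_strictMono (ha : ∀ k, a k ≠ ⊤) (hsum : ∑' k, a k = ⊤) :
    StrictMono (greedyCut a) := by
  refine strictMono_nat_of_lt_succ fun i => ?_
  by_contra! h
  simpa [Finset.Ico_eq_empty_of_le h] using sum_Ico_greedyCut_lt ha hsum i

lemma greedyIndex_preimage (ha : ∀ k, a k ≠ ⊤) (hsum : ∑' k, a k = ⊤) (i : ℕ) :
    greedyIndex a ⁻¹' {i} = Finset.Ico (greedyCut a i) (greedyCut a (i + 1)) := by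
  have hmono := greedyCut_strictMono ha hsum
  have hle : ∀ k j, greedyIndex a k ≤ j ↔ k < greedyCut a (j + 1) := fun k j => by
    refine ⟨fun h => ?_, fun h => Nat.sInf_le h⟩
    have hk : k < greedyCut a (greedyIndex a k + 1) :=
      Nat.sInf_mem (s := {i | k < greedyCut a (i + 1)}) ⟨k, hmono.le_apply⟩
    exact hk.trans_le (hmono.monotone (by lia))
  ext k
  rw [mem_preimage, mem_singleton_iff, Finset.mem_coe, Finset.mem_Ico, ← hle k i, ← not_lt]
  cases i with
  | zero => simp [greedyCut]
  | succ i => rw [← hle k i]; lia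

lemma finite_greedyIndex_preimage (ha : ∀ k, a k ≠ ⊤) (hsum : ∑' k, a k = ⊤) (i : ℕ) :
    (greedyIndex a ⁻¹' {i}).Finite := by
  rw [greedyIndex_preimage ha hsum]
  exact Finset.finite_toSet _

lemma tsum_greedyIndex_preimage_lt (ha : ∀ k, a k ≠ ⊤) (hsum : ∑' k, a k = ⊤) (i : ℕ) :
    ∑' k : ↥(greedyIndex a ⁻¹' {i}), a k < ∑' k : ↥(greedyIndex a ⁻¹' {i + 1}), a k := by
  rw [greedyIndex_preimage ha hsum, greedyIndex_preimage ha hsum,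
    Finset.tsum_subtype', Finset.tsum_subtype']
  exact sum_Ico_greedyCut_lt ha hsum (i + 1)

end GreedyPartition

section Coding

variable {Z : Type*} [MeasurableSpace Z] [MeasurableSpace X]

/-- `κ` is a Borel coding of the sections of the Borel relation `R` by natural numbers. Such a
coding makes projections and choices Borel, as the Lusin–Novikov theorem would. -/
structure IsCoding (R : Z → X → Prop) (κ : Z → X → ℕ) : Prop where
  measurableSet : MeasurableSet {p : Z × X | R p.1 p.2}
  measurable : Measurable fun p : Z × X => κ p.1 p.2
  injOn : ∀ z, InjOn (κ z) {x | R z x}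

namespace IsCoding

variable {R : Z → X → Prop} {κ : Z → X → ℕ}

lemma and (hκ : IsCoding R κ) {Q : Z → X → Prop} (hQ : MeasurableSet {p : Z × X | Q p.1 p.2}) :
    IsCoding (fun z x => R z x ∧ Q z x) κ where
  measurableSet := hκ.measurableSet.inter hQ
  measurable := hκ.measurable
  injOn z := (hκ.injOn z).mono fun _ h => h.1

variable [StandardBorelSpace Z] [StandardBorelSpace X]

lemma measurableSet_exists (hκ : IsCoding R κ) : MeasurableSet {z | ∃ x, R z x} := by
  have hproj : {z | ∃ x, R z x} =
      ⋃ n : ℕ, Prod.fst '' {p : Z × X | R p.1 p.2 ∧ κ p.1 p.2 = n} := by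
    ext z; simp
  rw [hproj]
  refine MeasurableSet.iUnion fun n => MeasurableSet.image_of_measurable_injOn
    (hκ.measurableSet.inter (hκ.measurable (measurableSet_singleton n))) measurable_fst ?_
  rintro ⟨z, x⟩ ⟨hx, hxn⟩ ⟨_, y⟩ ⟨hy, hyn⟩ rfl
  exact Prod.ext rfl (hκ.injOn z hx hy (hxn.trans hyn.symm))

lemma exists_measurable_argmin (hκ : IsCoding R κ) {d : Z → X} (hd : Measurable d) :
    ∃ f : Z → X, Measurable f ∧
      (∀ z, (∃ x, R z x) → R z (f z) ∧ ∀ x, R z x → κ z (f z) ≤ κ z x) ∧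
      ∀ z, (¬ ∃ x, R z x) → f z = d z := by
  let code : Z → ℕ := fun z => sInf {n | ∃ x, R z x ∧ κ z x = n}
  have hcode : Measurable code := measurable_sInf_nat fun n =>
    (hκ.and (Q := fun z x => κ z x = n)
      (hκ.measurable (measurableSet_singleton n))).measurableSet_exists
  have hchoice : ∀ z, ∃ y, ((∃ x, R z x) → R z y ∧ κ z y = code z) ∧
      ((¬ ∃ x, R z x) → y = d z) := fun z => by
    by_cases hz : ∃ x, R z x
    · obtain ⟨x, hx⟩ := hz
      obtain ⟨y, hy⟩ : code z ∈ {n | ∃ x, R z x ∧ κ z x = n} := Nat.sInf_mem ⟨κ z x, x, hx, rfl⟩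
      exact ⟨y, fun _ => hy, fun h => absurd ⟨x, hx⟩ h⟩
    · exact ⟨d z, fun h => absurd h hz, fun _ => rfl⟩
  choose f hf hfd using hchoice
  refine ⟨f, fun B hB => ?_, fun z hz => ⟨(hf z hz).1, fun x hx => ?_⟩, hfd⟩
  · have hpre : f ⁻¹' B =
        {z | ∃ x, R z x ∧ κ z x = code z ∧ x ∈ B} ∪ ({z | ∃ x, R z x}ᶜ ∩ d ⁻¹' B) := by
      ext z
      by_cases hz : ∃ x, R z x
      · have huniq : ∀ x, R z x → κ z x = code z → x = f z := fun x hx hxκ =>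
          hκ.injOn z hx (hf z hz).1 (hxκ.trans (hf z hz).2.symm)
        simp only [mem_preimage, mem_union, mem_inter_iff, mem_compl_iff, mem_ofPred_eq, hz,
          not_true, false_and, or_false]
        exact ⟨fun h => ⟨f z, (hf z hz).1, (hf z hz).2, h⟩,
          fun ⟨x, hx, hxκ, hxB⟩ => huniq x hx hxκ ▸ hxB⟩
      · simp [not_exists.1 hz, hfd z hz]
    have hmin : MeasurableSet {p : Z × X | κ p.1 p.2 = code p.1 ∧ p.2 ∈ B} :=
      (measurableSet_eq_fun hκ.measurable (hcode.comp measurable_fst)).inter (measurable_snd hB)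
    rw [hpre]
    exact (hκ.and hmin).measurableSet_exists.union (hκ.measurableSet_exists.compl.inter (hd hB))
  · exact (hf z hz).2.trans_le (Nat.sInf_le ⟨x, hx, rfl⟩)

end IsCoding

end Coding

section Size

variable {E : X → X → Prop} {ρ : X → X → ℝ}

lemma eSize_inter_preimage {ι : Type*} (ρ : X → X → ℝ) (Y : Set X) (p : X → ι) (A : Set ι)
    (z : X) : eSize ρ (Y ∩ p ⁻¹' A) z = ∑' k : A, eSize ρ (Y ∩ p ⁻¹' {↑k}) z := by
  have hunion : Y ∩ p ⁻¹' A = ⋃ k ∈ A, Y ∩ p ⁻¹' {k} := by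
    ext y; simp [and_comm]
  rw [hunion]
  refine ENNReal.tsum_biUnion' (S := A) (t := fun k => Y ∩ p ⁻¹' {k})
    (f := fun y => ENNReal.ofReal (ρ y z)) fun i _ j _ hij => ?_
  exact ((disjoint_singleton.2 hij).preimage p).mono inter_subset_right inter_subset_right

lemma lt_eSize_iff_of_subsingleton {Y : Set X} (hY : Y.Subsingleton) {z : X} {u : ℝ≥0∞} :
    u < eSize ρ Y z ↔ ∃ y ∈ Y, u < ENNReal.ofReal (ρ y z) := by
  rcases hY.eq_empty_or_singleton with rfl | ⟨y, rfl⟩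
  · simp [eSize]
  · rw [eSize, tsum_singleton y fun y => ENNReal.ofReal (ρ y z)]
    simp

lemma eSize_singleton (ρ : X → X → ℝ) (y z : X) :
    eSize ρ {y} z = ENNReal.ofReal (ρ y z) :=
  tsum_singleton y fun y => ENNReal.ofReal (ρ y z)

namespace IsCocycle

variable [MeasurableSpace X] {x y t : X} {Y Z : Set X}

lemma self_eq_one (hρ : IsCocycle E ρ) (hx : E x x) : ρ x x = 1 :=
  (mul_eq_left₀ (hρ.2.1 hx).ne').1 (hρ.2.2 hx hx).symm

lemma mul_swap_eq_one (hρ : IsCocycle E ρ) (hE : Equivalence E) (h : E x y) :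
    ρ x y * ρ y x = 1 :=
  (hρ.2.2 h (hE.symm h)).symm.trans (hρ.self_eq_one (hE.refl x))

lemma eSize_eq_mul (hρ : IsCocycle E ρ) (hY : ∀ y ∈ Y, E y x) (hxt : E x t) :
    eSize ρ Y t = eSize ρ Y x * ENNReal.ofReal (ρ x t) := by
  rw [eSize, eSize, ← ENNReal.tsum_mul_right]
  refine tsum_congr fun y => ?_
  rw [hρ.2.2 (hY y y.2) hxt, ENNReal.ofReal_mul (hρ.2.1 (hY y y.2)).le]

lemma eSize_lt_eSize_iff (hρ : IsCocycle E ρ) (hY : ∀ y ∈ Y, E y x) (hZ : ∀ y ∈ Z, E y x)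
    (hxt : E x t) : eSize ρ Y t < eSize ρ Z t ↔ eSize ρ Y x < eSize ρ Z x := by
  rw [hρ.eSize_eq_mul hY hxt, hρ.eSize_eq_mul hZ hxt]
  exact ENNReal.mul_lt_mul_iff_left (ENNReal.ofReal_pos.2 (hρ.2.1 hxt)).ne' ENNReal.ofReal_ne_top

lemma eSize_eq_top (hρ : IsCocycle E ρ) (hY : ∀ y ∈ Y, E y x) (hxt : E x t)
    (hx : eSize ρ Y x = ⊤) : eSize ρ Y t = ⊤ := by
  rw [hρ.eSize_eq_mul hY hxt, hx]
  exact ENNReal.top_mul (ENNReal.ofReal_pos.2 (hρ.2.1 hxt)).ne'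

lemma eSize_pos (hρ : IsCocycle E ρ) (hx : E x x) (hxY : x ∈ Y) : 0 < eSize ρ Y x :=
  (ENNReal.ofReal_pos.2 (hρ.2.1 hx)).trans_le <|
    ENNReal.le_tsum (f := fun y : Y => ENNReal.ofReal (ρ y x)) ⟨x, hxY⟩

end IsCocycle

end Size

section FibreBlocks

variable {ρ : X → X → ℝ} {s : X → X} {κ : X → X → ℕ}

/-- The `ρ`-size, relative to `t`, of the set of points of the fibre of `s` over `t` with code
`k`. This set has at most one point when `κ` codes the fibres of `s`. -/
noncomputable def fibreWeight (ρ : X → X → ℝ) (s : X → X) (κ : X → X → ℕ) (t : X) (k : ℕ) :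
    ℝ≥0∞ :=
  eSize ρ (s ⁻¹' {t} ∩ κ t ⁻¹' {k}) t

/-- Index of the block containing `y` when the fibre of `s` through `y`, enumerated by the codes
`κ`, is cut by the greedy partition for the `ρ`-sizes of its points. -/
noncomputable def blockIndex (ρ : X → X → ℝ) (s : X → X) (κ : X → X → ℕ) (y : X) : ℕ :=
  greedyIndex (fibreWeight ρ s κ (s y)) (κ (s y) y)

lemma fibre_inter_blockIndex_preimage (t : X) (i : ℕ) :
    s ⁻¹' {t} ∩ blockIndex ρ s κ ⁻¹' {i} =
      s ⁻¹' {t} ∩ κ t ⁻¹' (greedyIndex (fibreWeight ρ s κ t) ⁻¹' {i}) := by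
  ext y
  simp only [mem_inter_iff, mem_preimage, mem_singleton_iff, blockIndex]
  refine and_congr_right ?_
  rintro rfl
  rfl

lemma tsum_fibreWeight (t : X) : ∑' k, fibreWeight ρ s κ t k = eSize ρ (s ⁻¹' {t}) t := by
  have h := eSize_inter_preimage ρ (s ⁻¹' {t}) (κ t) univ t
  rw [preimage_univ, inter_univ] at h
  exact (tsum_univ fun k => fibreWeight ρ s κ t k).symm.trans h.symm

variable [MeasurableSpace X]

lemma IsCoding.subsingleton_fibre (hκ : IsCoding (fun t y => s y = t) κ) (t : X) (k : ℕ) :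
    (s ⁻¹' {t} ∩ κ t ⁻¹' {k}).Subsingleton :=
  fun _ hx _ hy => hκ.injOn t hx.1 hy.1 (hx.2.trans hy.2.symm)

lemma fibreWeight_ne_top (hκ : IsCoding (fun t y => s y = t) κ) (t : X) (k : ℕ) :
    fibreWeight ρ s κ t k ≠ ⊤ := by
  rw [fibreWeight]
  rcases (hκ.subsingleton_fibre t k).eq_empty_or_singleton with h | ⟨y, h⟩
  · simp [h, eSize]
  · simp [h, eSize_singleton]

lemma finite_fibre_inter_blockIndex (hκ : IsCoding (fun t y => s y = t) κ) {t : X}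
    (ht : eSize ρ (s ⁻¹' {t}) t = ⊤) (i : ℕ) :
    (s ⁻¹' {t} ∩ blockIndex ρ s κ ⁻¹' {i}).Finite := by
  rw [fibre_inter_blockIndex_preimage]
  exact Finite.of_injOn (f := κ t) (fun _ hy => hy.2) ((hκ.injOn t).mono fun _ hy => hy.1)
    (finite_greedyIndex_preimage (fibreWeight_ne_top hκ t) ((tsum_fibreWeight t).trans ht) i)

lemma eSize_fibre_inter_blockIndex_lt (hκ : IsCoding (fun t y => s y = t) κ) {t : X}
    (ht : eSize ρ (s ⁻¹' {t}) t = ⊤) (i : ℕ) :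
    eSize ρ (s ⁻¹' {t} ∩ blockIndex ρ s κ ⁻¹' {i}) t <
      eSize ρ (s ⁻¹' {t} ∩ blockIndex ρ s κ ⁻¹' {i + 1}) t := by
  rw [fibre_inter_blockIndex_preimage, fibre_inter_blockIndex_preimage,
    eSize_inter_preimage _ _ (κ t), eSize_inter_preimage _ _ (κ t)]
  exact tsum_greedyIndex_preimage_lt (fibreWeight_ne_top hκ t) ((tsum_fibreWeight t).trans ht) i

variable [StandardBorelSpace X]

lemma measurable_fibreWeight (hρ : Measurable fun p : X × X => ρ p.1 p.2)
    (hκ : IsCoding (fun t y => s y = t) κ) : Measurable (fibreWeight ρ s κ) := by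
  refine measurable_pi_iff.2 fun k => measurable_of_Ioi fun u => ?_
  let Q (t y : X) : Prop := κ t y = k ∧ u < ENNReal.ofReal (ρ y t)
  have hQ : MeasurableSet {p : X × X | Q p.1 p.2} :=
    (hκ.measurable (measurableSet_singleton k)).inter
      (measurableSet_lt measurable_const (hρ.comp measurable_swap).ennreal_ofReal)
  convert (hκ.and hQ).measurableSet_exists using 1
  ext t
  simp only [Q, mem_preimage, mem_Ioi, fibreWeight,
    lt_eSize_iff_of_subsingleton (hκ.subsingleton_fibre t k), mem_inter_iff, mem_singleton_iff,
    mem_ofPred_eq, and_assoc]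

lemma measurable_blockIndex (hρ : Measurable fun p : X × X => ρ p.1 p.2) (hs : Measurable s)
    (hκ : IsCoding (fun t y => s y = t) κ) : Measurable (blockIndex ρ s κ) :=
  measurable_greedyIndex.comp <|
    ((measurable_fibreWeight hρ hκ).comp hs).prodMk (hκ.measurable.comp (hs.prodMk measurable_id))

end FibreBlocks

section SeparatedColoring

variable [MeasurableSpace X] {E : X → X → Prop} {ρ : X → X → ℝ} {c : X → ℕ} {δ : ℝ}

/-- The Borel coloring `c` is `δ`-separated if the values of `log ρ` at distinct `E`-equivalent
points of the same color differ by at least `δ`. This is smoothness in additive terms. -/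
structure IsSeparatedColoring (E : X → X → Prop) (ρ : X → X → ℝ) (c : X → ℕ) (δ : ℝ) : Prop where
  measurable : Measurable c
  pos : 0 < δ
  eq_of_abs_log_lt : ∀ ⦃x y⦄, E x y → c x = c y → |Real.log (ρ x y)| < δ → x = y

lemma Smooth.exists_isSeparatedColoring (h : Smooth E ρ) (hpos : ∀ ⦃x y⦄, E x y → 0 < ρ x y) :
    ∃ c δ, IsSeparatedColoring E ρ c δ := by
  obtain ⟨U, hU, h1, -, c, hc, hcol⟩ := h
  obtain ⟨δ, hδ, hball⟩ :=
    Metric.isOpen_iff.1 (hU.preimage Real.continuous_exp) 0 (by simpa using h1)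
  refine ⟨c, δ, hc, hδ, fun x y hxy hcxy hlog => ?_⟩
  by_contra hne
  have hmem : Real.log (ρ x y) ∈ Real.exp ⁻¹' U := hball (by simpa using hlog)
  rw [mem_preimage, Real.exp_log (hpos hxy)] at hmem
  exact hcol (mem_univ x) (mem_univ y) hne hxy hmem hcxy

/-- The index of the interval `[kδ, (k + 1)δ)` that contains `log ρ(y, x)`. -/
noncomputable def logLevel (ρ : X → X → ℝ) (δ : ℝ) (x y : X) : ℤ :=
  ⌊Real.log (ρ y x) / δ⌋

lemma measurable_logLevel (hρ : Measurable fun p : X × X => ρ p.1 p.2) :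
    Measurable fun p : X × X => logLevel ρ δ p.1 p.2 :=
  Int.measurable_floor.comp ((Real.measurable_log.comp (hρ.comp measurable_swap)).div_const δ)

/-- `y` is a point of the `E`-class and of the `c`-color of `x` that is `ρ`-larger than `x`. -/
def IsAbove (E : X → X → Prop) (ρ : X → X → ℝ) (c : X → ℕ) (x y : X) : Prop :=
  E x y ∧ c y = c x ∧ 1 < ρ y x

lemma measurableSet_isAbove (hE : MeasurableSet {p : X × X | E p.1 p.2})
    (hρ : Measurable fun p : X × X => ρ p.1 p.2) (hc : Measurable c) :
    MeasurableSet {p : X × X | IsAbove E ρ c p.1 p.2} :=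
  hE.inter <| (measurableSet_eq_fun (hc.comp measurable_snd) (hc.comp measurable_fst)).inter <|
    measurableSet_lt measurable_const (hρ.comp measurable_swap)

namespace IsSeparatedColoring

lemma eq_of_logLevel_eq (hc : IsSeparatedColoring E ρ c δ) (hE : Equivalence E)
    (hρ : IsCocycle E ρ) {x y z : X} (hy : E x y) (hz : E x z) (hcyz : c y = c z)
    (hL : logLevel ρ δ x y = logLevel ρ δ x z) : y = z := by
  have hzx := hE.symm hz
  have hyz := hE.trans (hE.symm hy) hz
  have hlog : Real.log (ρ y x) - Real.log (ρ z x) = Real.log (ρ y z) := by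
    rw [hρ.2.2 hyz hzx, Real.log_mul (hρ.2.1 hyz).ne' (hρ.2.1 hzx).ne', add_sub_cancel_right]
  have hlt := Int.abs_sub_lt_one_of_floor_eq_floor hL
  rw [← sub_div, hlog, abs_div, abs_of_pos hc.pos, div_lt_one hc.pos] at hlt
  exact hc.eq_of_abs_log_lt hyz hcyz hlt

lemma exists_isCoding (hc : IsSeparatedColoring E ρ c δ) (hE : Equivalence E)
    (hEm : MeasurableSet {p : X × X | E p.1 p.2}) (hρ : IsCocycle E ρ) : ∃ κ, IsCoding E κ := by
  refine ⟨fun x y => Encodable.encode (c y, logLevel ρ δ x y), hEm, ?_, fun x y hy z hz h => ?_⟩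
  · exact (Measurable.of_discrete (f := fun q : ℕ × ℤ => Encodable.encode q)).comp
      ((hc.measurable.comp measurable_snd).prodMk (measurable_logLevel hρ.1))
  · obtain ⟨hcyz, hL⟩ := Prod.mk.inj (Encodable.encode_injective h)
    exact hc.eq_of_logLevel_eq hE hρ hy hz hcyz hL

lemma eq_of_not_isAbove (hc : IsSeparatedColoring E ρ c δ) (hE : Equivalence E)
    (hρ : IsCocycle E ρ) {x y : X} (hxy : E x y) (hcxy : c x = c y) (hx : ¬ IsAbove E ρ c x y)
    (hy : ¬ IsAbove E ρ c y x) : x = y := by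
  have hle : ρ x y ≤ 1 := not_lt.1 fun h => hy ⟨hE.symm hxy, hcxy, h⟩
  have hge : ρ y x ≤ 1 := not_lt.1 fun h => hx ⟨hxy, hcxy.symm, h⟩
  have hone : ρ x y = 1 := by
    refine hle.antisymm ?_
    calc 1 = ρ x y * ρ y x := (hρ.mul_swap_eq_one hE hxy).symm
      _ ≤ ρ x y := mul_le_of_le_one_right (hρ.2.1 hxy).le hge
  exact hc.eq_of_abs_log_lt hxy hcxy (by simpa [hone] using hc.pos)

lemma isCoding_isAbove (hc : IsSeparatedColoring E ρ c δ) (hE : Equivalence E)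
    (hEm : MeasurableSet {p : X × X | E p.1 p.2}) (hρ : IsCocycle E ρ) :
    IsCoding (IsAbove E ρ c) fun x y => (logLevel ρ δ x y).toNat where
  measurableSet := measurableSet_isAbove hEm hρ.1 hc.measurable
  measurable := (Measurable.of_discrete (f := Int.toNat)).comp (measurable_logLevel hρ.1)
  injOn x y hy z hz h := by
    have hnonneg : ∀ w, IsAbove E ρ c x w → 0 ≤ logLevel ρ δ x w := fun w hw =>
      Int.floor_nonneg.2 (div_nonneg (Real.log_nonneg hw.2.2.le) hc.pos.le)
    have hlevel : logLevel ρ δ x y = logLevel ρ δ x z := by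
      have hy0 := hnonneg y hy
      have hz0 := hnonneg z hz
      dsimp only at h
      lia
    exact hc.eq_of_logLevel_eq hE hρ hy.1 hz.1 (hy.2.1.trans hz.2.1.symm) hlevel

end IsSeparatedColoring

/-- `g` maps each point having a point above it to the `ρ`-least such point. -/
structure IsSuccessor (E : X → X → Prop) (ρ : X → X → ℝ) (c : X → ℕ) (g : X → X) : Prop where
  isAbove : ∀ ⦃x⦄, (∃ y, IsAbove E ρ c x y) → IsAbove E ρ c x (g x)
  le : ∀ ⦃x y⦄, IsAbove E ρ c x y → ρ (g x) x ≤ ρ y x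

lemma IsSeparatedColoring.exists_measurable_isSuccessor [StandardBorelSpace X]
    (hc : IsSeparatedColoring E ρ c δ) (hE : Equivalence E)
    (hEm : MeasurableSet {p : X × X | E p.1 p.2}) (hρ : IsCocycle E ρ) :
    ∃ g, Measurable g ∧ IsSuccessor E ρ c g := by
  have hκ := hc.isCoding_isAbove hE hEm hρ
  obtain ⟨g, hgm, hg, -⟩ := hκ.exists_measurable_argmin measurable_id
  refine ⟨g, hgm, fun x hx => (hg x hx).1, fun x y hy => ?_⟩
  obtain ⟨hgx, hmin⟩ := hg x ⟨y, hy⟩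
  by_contra! hlt
  have hlevel : logLevel ρ δ x y ≤ logLevel ρ δ x (g x) :=
    Int.floor_mono <| div_le_div_of_nonneg_right
      (Real.log_le_log (hρ.2.1 (hE.symm hy.1)) hlt.le) hc.pos.le
  have heq : y = g x := hκ.injOn x hy hgx ((Int.toNat_le_toNat hlevel).antisymm (hmin y hy))
  exact hlt.ne (heq ▸ rfl)

lemma IsSuccessor.eq_of_map_eq {g : X → X} (hg : IsSuccessor E ρ c g)
    (hc : IsSeparatedColoring E ρ c δ) (hE : Equivalence E) (hρ : IsCocycle E ρ) {x y : X}
    (hx : ∃ z, IsAbove E ρ c x z) (hy : ∃ z, IsAbove E ρ c y z) (hxy : g x = g y) : x = y := by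
  have hgx := hg.isAbove hx
  have hgy := hg.isAbove hy
  have hnot : ∀ ⦃x y⦄, IsAbove E ρ c y (g y) → g x = g y → ¬ IsAbove E ρ c x y := by
    intro x y hgy hgxy habove
    have hle := hg.le habove
    rw [hgxy, hρ.2.2 (hE.symm hgy.1) (hE.symm habove.1)] at hle
    exact hle.not_gt (lt_mul_of_one_lt_left (hρ.2.1 (hE.symm habove.1)) hgy.2.2)
  have hE' : E x y := hE.trans hgx.1 (hxy ▸ hE.symm hgy.1)
  have hcxy : c x = c y := hgx.2.1.symm.trans (hxy ▸ hgy.2.1)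
  exact hc.eq_of_not_isAbove hE hρ hE' hcxy (hnot hgy hxy) (hnot hgx hxy.symm)

/-- `s` is a Borel selector for the restriction of `E` to the `E`-invariant Borel set `S`,
extended by the identity. -/
structure IsSelectorOn (E : X → X → Prop) (S : Set X) (s : X → X) : Prop where
  measurable : Measurable s
  measurableSet : MeasurableSet S
  invariant : EInvariant E S
  rel : ∀ x, E x (s x)
  map_eq : ∀ x ∈ S, ∀ y, E x y → s x = s y
  eq_self : ∀ x ∉ S, s x = x

-- Within a class, the points with nothing above them have distinct colors, so the one of least
-- color is a canonical choice.
lemma IsSeparatedColoring.exists_isSelectorOn [StandardBorelSpace X]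
    (hc : IsSeparatedColoring E ρ c δ) (hE : Equivalence E)
    (hEm : MeasurableSet {p : X × X | E p.1 p.2}) (hρ : IsCocycle E ρ) :
    ∃ S s, IsSelectorOn E S s ∧ ∀ x ∉ S, ∃ y, IsAbove E ρ c x y := by
  let R (x y : X) : Prop := E x y ∧ ¬ ∃ z, IsAbove E ρ c y z
  have hM : MeasurableSet {y | ∃ z, IsAbove E ρ c y z} :=
    (hc.isCoding_isAbove hE hEm hρ).measurableSet_exists
  have hR : IsCoding R fun _ y => c y :=
    { measurableSet := hEm.inter (measurable_snd hM.compl)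
      measurable := hc.measurable.comp measurable_snd
      injOn := fun x y hy z hz hcyz => hc.eq_of_not_isAbove hE hρ
        (hE.trans (hE.symm hy.1) hz.1) hcyz (fun h => hy.2 ⟨z, h⟩) (fun h => hz.2 ⟨y, h⟩) }
  have htrans : ∀ ⦃x y z⦄, E x y → R x z → R y z := fun x y z hxy hz =>
    ⟨hE.trans (hE.symm hxy) hz.1, hz.2⟩
  obtain ⟨s, hsm, hs, hsd⟩ := hR.exists_measurable_argmin measurable_id
  refine ⟨{x | ∃ y, R x y}, s, ⟨hsm, hR.measurableSet_exists, ?_, fun x => ?_, ?_, hsd⟩, ?_⟩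
  · exact fun x y hxy ⟨z, hz⟩ => ⟨z, htrans hxy hz⟩
  · by_cases hx : ∃ y, R x y
    · exact (hs x hx).1.1
    · exact (hsd x hx).symm ▸ hE.refl x
  · rintro x ⟨z, hz⟩ y hxy
    obtain ⟨hsx, hminx⟩ := hs x ⟨z, hz⟩
    obtain ⟨hsy, hminy⟩ := hs y ⟨z, htrans hxy hz⟩
    have hsy' := htrans (hE.symm hxy) hsy
    exact hR.injOn x hsx hsy' ((hminx _ hsy').antisymm (hminy _ (htrans hxy hsx)))
  · exact fun x hx => by_contra fun h => hx ⟨x, hE.refl x, h⟩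

end SeparatedColoring

section StrictLift

variable {E F : X → X → Prop} {ρ : X → X → ℝ} {S : Set X} {s f g : X → X} {b : X → ℕ} {x : X}

/-- `f` induces a strictly `ρ / F`-increasing injection of `F`-classes at the `F`-class of `x`.
Only the `E`-class of `x` is involved, so that such maps can be glued along `E`-invariant sets. The
size inequality is stated before dividing by the size of the `F`-class of `x`. -/
structure IsStrictLiftAt (E F : X → X → Prop) (ρ : X → X → ℝ) (f : X → X) (x : X) : Prop where
  rel : E x (f x)
  map_rel_iff : ∀ ⦃y⦄, E x y → (F (f x) (f y) ↔ F x y)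
  eSize_lt : eSize ρ {y | E x y ∧ F (f y) x} x < eSize ρ {y | F y x} x

lemma IsStrictLiftAt.congr (hf : IsStrictLiftAt E F ρ f x) (hx : E x x)
    (hfg : EqOn f g {y | E x y}) : IsStrictLiftAt E F ρ g x where
  rel := hfg hx ▸ hf.rel
  map_rel_iff y hy := by rw [← hfg hx, ← hfg hy, hf.map_rel_iff hy]
  eSize_lt := by
    have hset : {y | E x y ∧ F (g y) x} = {y | E x y ∧ F (f y) x} :=
      Set.ext fun y => and_congr_right fun hy => by rw [hfg hy]
    exact hset ▸ hf.eSize_lt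

lemma IsSuccessor.isStrictLiftAt [MeasurableSpace X] {c : X → ℕ} {δ : ℝ}
    (hg : IsSuccessor E ρ c g) (hc : IsSeparatedColoring E ρ c δ) (hE : Equivalence E)
    (hρ : IsCocycle E ρ) (hF : ∀ ⦃y⦄, E x y → ∀ z, F z y ↔ z = y)
    (habove : ∀ ⦃y⦄, E x y → ∃ z, IsAbove E ρ c y z) : IsStrictLiftAt E F ρ g x where
  rel := (hg.isAbove (habove (hE.refl x))).1
  map_rel_iff y hxy := by
    have hgy : E x (g y) := hE.trans hxy (hg.isAbove (habove hxy)).1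
    rw [hF hgy, hF hxy]
    exact ⟨hg.eq_of_map_eq hc hE hρ (habove (hE.refl x)) (habove hxy), congrArg g⟩
  eSize_lt := by
    have hsub : {y | E x y ∧ F (g y) x}.Subsingleton := fun y hy z hz =>
      hg.eq_of_map_eq hc hE hρ (habove hy.1) (habove hz.1) <|
        ((hF (hE.refl x) _).1 hy.2).trans ((hF (hE.refl x) _).1 hz.2).symm
    have hFx : {y | F y x} = {x} := Set.ext (hF (hE.refl x))
    rw [hFx, eSize_singleton, hρ.self_eq_one (hE.refl x), ENNReal.ofReal_one]
    rcases hsub.eq_empty_or_singleton with hempty | ⟨y, hy⟩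
    · simp [hempty, eSize]
    · obtain ⟨hxy, hFgy⟩ : y ∈ {y | E x y ∧ F (g y) x} := hy ▸ mem_singleton y
      obtain rfl := (hF (hE.refl x) _).1 hFgy
      have hlt : 1 < ρ (g y) y := (hg.isAbove (habove hxy)).2.2
      rw [hy, eSize_singleton, ENNReal.ofReal_lt_one, ← hρ.mul_swap_eq_one hE (hE.symm hxy)]
      exact lt_mul_of_one_lt_right (hρ.2.1 (hE.symm hxy)) hlt

/-- Equivalence relation whose classes are the blocks `b = i` of the fibres of `s`. -/
def blockRel (s : X → X) (b : X → ℕ) (x y : X) : Prop :=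
  s x = s y ∧ b x = b y

lemma equivalence_blockRel (s : X → X) (b : X → ℕ) : Equivalence (blockRel s b) where
  refl _ := ⟨rfl, rfl⟩
  symm h := ⟨h.1.symm, h.2.symm⟩
  trans h h' := ⟨h.1.trans h'.1, h.2.trans h'.2⟩

namespace IsSelectorOn

variable [MeasurableSpace X]

lemma rel_of_map_eq (hs : IsSelectorOn E S s) (hE : Equivalence E) {x y : X} (h : s x = s y) :
    E x y :=
  hE.trans (hs.rel x) (h ▸ hE.symm (hs.rel y))

lemma fibre_eq (hs : IsSelectorOn E S s) (hE : Equivalence E) (hx : x ∈ S) :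
    s ⁻¹' {s x} = {y | E y x} :=
  Set.ext fun y => ⟨hs.rel_of_map_eq hE, fun hyx => (hs.map_eq x hx y (hE.symm hyx)).symm⟩

lemma blockRel_iff_eq (hs : IsSelectorOn E S s) (hE : Equivalence E) (hx : x ∉ S) (y : X) :
    blockRel s b y x ↔ y = x := by
  refine ⟨fun h => ?_, fun h => h ▸ ⟨rfl, rfl⟩⟩
  have hy : y ∉ S := fun hy => hx (hs.invariant (hs.rel_of_map_eq hE h.1) hy)
  rw [← hs.eq_self x hx, ← hs.eq_self y hy, h.1]

lemma isCoding_fibre [MeasurableEq X] (hs : IsSelectorOn E S s) (hE : Equivalence E)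
    {κ : X → X → ℕ} (hκ : IsCoding E κ) : IsCoding (fun t y => s y = t) κ where
  measurableSet := measurableSet_eq_fun (hs.measurable.comp measurable_snd) measurable_fst
  measurable := hκ.measurable
  injOn t := (hκ.injOn t).mono fun y hy => hE.symm (hy ▸ hs.rel y)

lemma isFinSubequiv_blockRel [StandardBorelSpace X] (hs : IsSelectorOn E S s) (hE : Equivalence E)
    (hb : Measurable b) (hfin : ∀ x ∈ S, (s ⁻¹' {s x} ∩ b ⁻¹' {b x}).Finite) :
    IsFinSubequiv E (blockRel s b) := by
  refine ⟨equivalence_blockRel s b, ?_, fun x y h => hs.rel_of_map_eq hE h.1, fun x => ?_⟩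
  · exact (measurableSet_eq_fun (hs.measurable.comp measurable_fst)
      (hs.measurable.comp measurable_snd)).inter
      (measurableSet_eq_fun (hb.comp measurable_fst) (hb.comp measurable_snd))
  · by_cases hx : x ∈ S
    · exact (hfin x hx).subset fun y hy => ⟨hy.1.symm, hy.2.symm⟩
    · exact (finite_singleton x).subset fun y hy =>
        (hs.blockRel_iff_eq hE hx y).1 ((equivalence_blockRel s b).symm hy)

lemma exists_blocks [StandardBorelSpace X] (hs : IsSelectorOn E S s) (hE : Equivalence E)
    {κ : X → X → ℕ} (hκ : IsCoding E κ) (hρ : IsCocycle E ρ)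
    (haper : ∀ x, eSize ρ {y | E y x} x = ⊤) :
    ∃ b : X → ℕ, Measurable b ∧ ∀ x ∈ S, ∀ i,
      (s ⁻¹' {s x} ∩ b ⁻¹' {i}).Finite ∧
        eSize ρ (s ⁻¹' {s x} ∩ b ⁻¹' {i}) x < eSize ρ (s ⁻¹' {s x} ∩ b ⁻¹' {i + 1}) x := by
  have hκs := hs.isCoding_fibre hE hκ
  refine ⟨blockIndex ρ s κ, measurable_blockIndex hρ.1 hs.measurable hκs, fun x hx i => ?_⟩
  have hfibre : ∀ y ∈ s ⁻¹' {s x}, E y x := fun y hy => hs.rel_of_map_eq hE hy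
  have htop : eSize ρ (s ⁻¹' {s x}) (s x) = ⊤ :=
    hρ.eSize_eq_top hfibre (hs.rel x) (hs.fibre_eq hE hx ▸ haper x)
  refine ⟨finite_fibre_inter_blockIndex hκs htop i, ?_⟩
  exact (hρ.eSize_lt_eSize_iff (fun y hy => hfibre y hy.1) (fun y hy => hfibre y hy.1)
    (hs.rel x)).1 (eSize_fibre_inter_blockIndex_lt hκs htop i)

lemma isStrictLiftAt_blockRel (hs : IsSelectorOn E S s) (hE : Equivalence E)
    (hρ : IsCocycle E ρ)
    (hlt : ∀ i, eSize ρ (s ⁻¹' {s x} ∩ b ⁻¹' {i}) x < eSize ρ (s ⁻¹' {s x} ∩ b ⁻¹' {i + 1}) x)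
    (hf : ∀ ⦃y⦄, E x y → s (f y) = s y ∧ b (f y) = b y + 1) :
    IsStrictLiftAt E (blockRel s b) ρ f x where
  rel := hs.rel_of_map_eq hE (hf (hE.refl x)).1.symm
  map_rel_iff y hxy := by
    obtain ⟨hsx, hbx⟩ := hf (hE.refl x)
    obtain ⟨hsy, hby⟩ := hf hxy
    rw [blockRel, blockRel, hsx, hsy, hbx, hby, Nat.add_right_cancel_iff]
  eSize_lt := by
    have hclass : {y | blockRel s b y x} = s ⁻¹' {s x} ∩ b ⁻¹' {b x} := rfl
    have hpre : {y | E x y ∧ blockRel s b (f y) x} = s ⁻¹' {s x} ∩ {y | b y + 1 = b x} := by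
      ext y
      constructor
      · rintro ⟨hxy, hsy, hby⟩
        exact ⟨(hf hxy).1.symm.trans hsy, (hf hxy).2.symm.trans hby⟩
      · rintro ⟨hsy, hby⟩
        have hxy := hE.symm (hs.rel_of_map_eq hE hsy)
        exact ⟨hxy, (hf hxy).1.trans hsy, (hf hxy).2.trans hby⟩
    rw [hpre, hclass]
    cases hbx : b x with
    | zero =>
      have hempty : s ⁻¹' {s x} ∩ {y | b y + 1 = 0} = ∅ := by simp
      rw [hempty]
      have hmem : x ∈ s ⁻¹' {s x} ∩ b ⁻¹' {0} := ⟨rfl, hbx⟩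
      simpa [eSize] using hρ.eSize_pos (hE.refl x) hmem
    | succ i =>
      have hprev : {y | b y + 1 = i + 1} = b ⁻¹' {i} := Set.ext fun _ => Nat.add_right_cancel_iff
      exact hprev ▸ hlt i

lemma exists_next_block [StandardBorelSpace X] (hs : IsSelectorOn E S s) (hE : Equivalence E)
    {κ : X → X → ℕ} (hκ : IsCoding E κ) (hb : Measurable b)
    (hlt : ∀ x ∈ S, ∀ i,
      eSize ρ (s ⁻¹' {s x} ∩ b ⁻¹' {i}) x < eSize ρ (s ⁻¹' {s x} ∩ b ⁻¹' {i + 1}) x) :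
    ∃ f : X → X, Measurable f ∧ ∀ x ∈ S, s (f x) = s x ∧ b (f x) = b x + 1 := by
  let Q (x y : X) : Prop := s y = s x ∧ b y = b x + 1
  have hQ : MeasurableSet {p : X × X | Q p.1 p.2} :=
    (measurableSet_eq_fun (hs.measurable.comp measurable_snd)
      (hs.measurable.comp measurable_fst)).inter
      (measurableSet_eq_fun (hb.comp measurable_snd) ((hb.comp measurable_fst).add_const 1))
  obtain ⟨f, hfm, hf, -⟩ := (hκ.and hQ).exists_measurable_argmin measurable_id
  refine ⟨f, hfm, fun x hx => (hf x ?_).1.2⟩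
  have hpos : 0 < eSize ρ (s ⁻¹' {s x} ∩ b ⁻¹' {b x + 1}) x := zero_le.trans_lt (hlt x hx _)
  obtain ⟨y, hy⟩ : (s ⁻¹' {s x} ∩ b ⁻¹' {b x + 1}).Nonempty :=
    nonempty_iff_ne_empty.2 fun h => by simp [h, eSize] at hpos
  exact ⟨y, hE.symm (hs.rel_of_map_eq hE hy.1), hy⟩

end IsSelectorOn

theorem exists_isStrictLiftAt [MeasurableSpace X] [StandardBorelSpace X] (hE : Equivalence E)
    (hEm : MeasurableSet {p : X × X | E p.1 p.2}) (hρ : IsCocycle E ρ)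
    (haper : ∀ x, eSize ρ {y | E y x} x = ⊤) (hsm : Smooth E ρ) :
    ∃ F f, IsFinSubequiv E F ∧ Measurable f ∧ ∀ x, IsStrictLiftAt E F ρ f x := by
  classical
  obtain ⟨c, δ, hc⟩ := hsm.exists_isSeparatedColoring hρ.2.1
  obtain ⟨κ, hκ⟩ := hc.exists_isCoding hE hEm hρ
  obtain ⟨S, s, hs, habove⟩ := hc.exists_isSelectorOn hE hEm hρ
  obtain ⟨b, hb, hblocks⟩ := hs.exists_blocks hE hκ hρ haper
  obtain ⟨f, hfm, hf⟩ := hs.exists_next_block hE hκ hb fun x hx i => (hblocks x hx i).2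
  obtain ⟨g, hgm, hg⟩ := hc.exists_measurable_isSuccessor hE hEm hρ
  refine ⟨blockRel s b, S.piecewise f g,
    hs.isFinSubequiv_blockRel hE hb fun x hx => (hblocks x hx _).1,
    hfm.piecewise hs.measurableSet hgm, fun x => ?_⟩
  by_cases hx : x ∈ S
  · have hS : ∀ ⦃y⦄, E x y → y ∈ S := fun y hxy => hs.invariant hxy hx
    exact (hs.isStrictLiftAt_blockRel hE hρ (fun i => (hblocks x hx i).2)
      fun y hxy => hf y (hS hxy)).congr (hE.refl x) fun y hxy =>
        (piecewise_eq_of_mem S f g (hS hxy)).symm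
  · have hS : ∀ ⦃y⦄, E x y → y ∉ S := fun y hxy hy => hx (hs.invariant (hE.symm hxy) hy)
    exact (hg.isStrictLiftAt hc hE hρ (fun y hxy => hs.blockRel_iff_eq hE (hS hxy))
      fun y hxy => habove y (hS hxy)).congr (hE.refl x) fun y hxy =>
        (piecewise_eq_of_notMem S f g (hS hxy)).symm

end StrictLift

/-- If `ρ` is aperiodic and smooth, then there is a finite Borel subequivalence relation `F`
of `E` admitting a strictly `(ρ / F)`-increasing Borel injection of `X / F` into itself. -/
theorem stmt8 [MeasurableSpace X] [StandardBorelSpace X]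
    (E : X → X → Prop) (hE : IsCBER E)
    (ρ : X → X → ℝ) (hρ : IsCocycle E ρ)
    (haper : ∀ x : X, eSize ρ {y | E y x} x = ⊤)
    (hsm : Smooth E ρ) :
    ∃ (F : X → X → Prop) (hF : Equivalence F), IsFinSubequiv E F ∧
      ∃ φ : Quotient (Setoid.mk F hF) → Quotient (Setoid.mk F hF),
        Measurable φ ∧ Function.Injective φ ∧
        (∀ x y : X, φ (Quotient.mk (Setoid.mk F hF) x) = Quotient.mk (Setoid.mk F hF) y →
          E x y) ∧
        ∀ x : X,
          relSize ρ {y | φ (Quotient.mk (Setoid.mk F hF) y) = Quotient.mk (Setoid.mk F hF) x}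
            {y | F y x} x < 1 := by
  obtain ⟨F, f, hF, hfm, hf⟩ := exists_isStrictLiftAt hE.1 hE.2.1 hρ haper hsm
  refine ⟨F, hF.1, hF, ?_⟩
  let r : Setoid X := Setoid.mk F hF.1
  have hmk : ∀ x y : X, Quotient.mk r x = Quotient.mk r y ↔ F x y := fun _ _ => Quotient.eq
  have hrel : ∀ x y, F (f x) y → E x y := fun x y h => hE.1.trans (hf x).rel (hF.2.2.1 h)
  have hf_iff : ∀ x y, F (f x) (f y) ↔ F x y := fun x y =>
    ⟨fun h => ((hf x).map_rel_iff (hE.1.trans (hrel x _ h) (hE.1.symm (hf y).rel))).1 h,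
      fun h => ((hf x).map_rel_iff (hF.2.2.1 h)).2 h⟩
  refine ⟨Quotient.map f fun x y => (hf_iff x y).2, ?_, ?_, fun x y h => ?_, fun x => ?_⟩
  · exact measurable_from_quotient.2 (measurable_quotient_mk'.comp hfm)
  · rintro ⟨x⟩ ⟨y⟩ h
    exact (hmk x y).2 ((hf_iff x y).1 ((hmk _ _).1 h))
  · exact hrel x y ((hmk _ _).1 h)
  · have hpre : {y | Quotient.map f (fun x y => (hf_iff x y).2) (Quotient.mk r y) =
        Quotient.mk r x} = {y | E x y ∧ F (f y) x} := Set.ext fun y =>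
      (hmk (f y) x).trans ⟨fun h => ⟨hE.1.symm (hrel y x h), h⟩, And.right⟩
    refine ENNReal.div_lt_of_lt_mul ?_
    rw [one_mul]
    exact hpre ▸ (hf x).eSize_lt

end CocycleNadkarni
end

section
/- Let X be a standard Borel space, E a countable Borel equivalence relation on X, ρ : E → (0,∞) a Borel cocycle, and μ a ρ-invariant Borel measure. Then μ(φ⁻¹(B)) = ∫_B |φ⁻¹(x)|^x_ρ dμ(x) for all Borel sets B ⊆ X and all Borel functions φ : X → X whose graphs are contained in E. -/
open MeasureTheory Set ENNReal

namespace CocycleNadkarni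

variable {X : Type*} {Γ : Type*}

/-!
By the Lusin–Novikov theorem, `X` splits into countably many Borel pieces on which `φ` is injective,
and the pieces may be refined so that `φ` moves each of their points either out of the piece or not
at all. On such a piece, exchanging `x` with `φ x` defines a Borel involution with graph in `E`, to
which invariance applies; summing over the pieces gives the formula.

For Lusin–Novikov, remove from `X` a countable family of Borel sets on which `φ` is injective,
chosen so that every nonempty set of points of the remainder `Y` described by which basic open
sets their fiber meets contains two points of one fiber. If `Y` were nonempty, a Baire category
argument in the space of sequences lying in a single fiber of `Y` would produce a perfect, hence
uncountable, subset of a fiber.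
-/

section AnalyticSet

variable {Z : Type*} [TopologicalSpace X] [PolishSpace X]

theorem analyticSet_exists_mem_rel [TopologicalSpace Z] [PolishSpace Z] {R : X → Z → Prop}
    (hR : AnalyticSet {p : X × Z | R p.1 p.2}) {S : Set Z} (hS : AnalyticSet S) :
    AnalyticSet {x | ∃ y ∈ S, R x y} := by
  have hinter : AnalyticSet (⋂ b : Bool, cond b {p : X × Z | R p.1 p.2} (Prod.snd ⁻¹' S)) :=
    AnalyticSet.iInter (Bool.rec (hS.preimage continuous_snd) hR)
  convert! hinter.image_of_continuous continuous_fst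
  ext x
  simp [and_comm]

variable [MeasurableSpace X] [BorelSpace X]

/- Separating `A` from its neighbours leaves a Borel set that need not be independent; separating
`A` again, now from the neighbours of that Borel set, repairs this. -/
theorem exists_measurableSet_superset_independent {R : X → X → Prop}
    (hR : AnalyticSet {p : X × X | R p.1 p.2}) (hsymm : ∀ ⦃x y⦄, R x y → R y x)
    {A : Set X} (hA : AnalyticSet A) (hind : ∀ x ∈ A, ∀ y ∈ A, ¬R x y) :
    ∃ B ⊇ A, MeasurableSet B ∧ ∀ x ∈ B, ∀ y ∈ B, ¬R x y := by
  obtain ⟨B₀, hAB₀, hdisj₀, hB₀⟩ :=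
    hA.measurablySeparable (analyticSet_exists_mem_rel hR hA) <|
      Set.disjoint_left.2 fun x hx ⟨y, hy, hxy⟩ => hind x hx y hy hxy
  obtain ⟨B₁, hAB₁, hdisj₁, hB₁⟩ :=
    hA.measurablySeparable (analyticSet_exists_mem_rel hR hB₀.analyticSet) <|
      Set.disjoint_left.2 fun x hx ⟨y, hy, hxy⟩ =>
        Set.disjoint_left.1 hdisj₀ ⟨x, hx, hsymm hxy⟩ hy
  exact ⟨B₀ ∩ B₁, subset_inter hAB₀ hAB₁, hB₀.inter hB₁, fun x hx y hy hxy =>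
    Set.disjoint_left.1 hdisj₁ ⟨y, hy.1, hxy⟩ hx.2⟩

theorem exists_measurableSet_superset_injOn [TopologicalSpace Z] [T2Space Z] {f : X → Z}
    (hf : Continuous f) {A : Set X} (hA : AnalyticSet A) (hinj : InjOn f A) :
    ∃ B ⊇ A, MeasurableSet B ∧ InjOn f B := by
  have hR : MeasurableSet {p : X × X | p.1 ≠ p.2 ∧ f p.1 = f p.2} :=
    (isOpen_ne_fun continuous_fst continuous_snd).measurableSet.inter
      (isClosed_eq hf.fst' hf.snd').measurableSet
  obtain ⟨B, hAB, hB, hind⟩ := exists_measurableSet_superset_independent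
    (R := fun x y => x ≠ y ∧ f x = f y) hR.analyticSet (fun _ _ h => ⟨h.1.symm, h.2.symm⟩) hA
    fun x hx y hy h => h.1 (hinj hx hy h.2)
  exact ⟨B, hAB, hB, fun x hx y hy hxy => by_contra fun hne => hind x hx y hy ⟨hne, hxy⟩⟩

end AnalyticSet

section FiberSplitting

variable {Z : Type*}

/-- The points of `U ∩ Y` whose `f`-fiber inside `Y` meets every member of the family `C`:
they record which configurations of sets are realized within one fiber of `Y`. -/
def linkedPoints (f : X → Z) (Y : Set X) (C : Set (Set X)) (U : Set X) : Set X :=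
  {x ∈ U ∩ Y | ∀ W ∈ C, ∃ y ∈ W ∩ Y, f x = f y}

theorem linkedPoints_mono_left {f : X → Z} {Y Y' : Set X} (hY : Y ⊆ Y') (C : Set (Set X))
    (U : Set X) : linkedPoints f Y C U ⊆ linkedPoints f Y' C U :=
  fun _ hx => ⟨⟨hx.1.1, hY hx.1.2⟩, fun W hW =>
    let ⟨y, hy, hxy⟩ := hx.2 W hW
    ⟨y, ⟨hy.1, hY hy.2⟩, hxy⟩⟩

/-- The sequences of points of `Y` that stay inside a single `f`-fiber. Their closure is the Polish
space in which the Baire category theorem is applied. -/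
def fiberSequences (f : X → Z) (Y : Set X) : Set (ℕ → X) :=
  {x | (∀ i, x i ∈ Y) ∧ ∀ i j, f (x i) = f (x j)}

theorem exists_mem_fiberSequences_of_mem_linkedPoints {f : X → Z} {Y U : Set X} {F : Set ℕ}
    {u : ℕ → Set X} {a a' : X} (ha : a ∈ linkedPoints f Y (u '' F) U) (ha' : a' ∈ Y)
    (hfa : f a = f a') {i m : ℕ} (hau : i ∈ F → a ∈ u i) (hmi : m ≠ i) (hmF : m ∉ F) :
    ∃ w ∈ fiberSequences f Y, (∀ k ∈ F, w k ∈ u k) ∧ w i = a ∧ w m = a' := by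
  have hcoord : ∀ k, ∃ y ∈ Y, f a = f y ∧ (k ∈ F → y ∈ u k) ∧ (k = i → y = a) ∧
      (k = m → y = a') := by
    intro k
    by_cases hki : k = i
    · subst hki
      exact ⟨a, ha.1.2, rfl, hau, fun _ => rfl, fun h => (hmi h.symm).elim⟩
    by_cases hkm : k = m
    · subst hkm
      exact ⟨a', ha', hfa, fun h => (hmF h).elim, fun h => (hki h).elim, fun _ => rfl⟩
    by_cases hkF : k ∈ F
    · obtain ⟨y, hy, hay⟩ := ha.2 (u k) (mem_image_of_mem u hkF)
      exact ⟨y, hy.2, hay, fun _ => hy.1, fun h => (hki h).elim, fun h => (hkm h).elim⟩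
    · exact ⟨a, ha.1.2, rfl, fun h => (hkF h).elim, fun _ => rfl, fun h => (hkm h).elim⟩
  choose w hwY hfw hwF hwi hwm using hcoord
  exact ⟨w, ⟨hwY, fun j k => (hfw j).symm.trans (hfw k)⟩, hwF, hwi i rfl, hwm m rfl⟩

variable [TopologicalSpace X]

/-- `Y` is fiber-splitting for `f` if, given open sets `U` and `W₁, …, Wₙ` that all meet one common
fiber inside `Y`, some fiber inside `Y` meets all of them and contains two points of `U` (stated in
contrapositive form). A nonempty such `Y` is the obstruction to covering `X` by countably many Borel
sets on which `f` is injective. -/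
def IsFiberSplitting (f : X → Z) (Y : Set X) : Prop :=
  ∀ C : Set (Set X), C.Finite → (∀ W ∈ C, IsOpen W) → ∀ U, IsOpen U →
    InjOn f (linkedPoints f Y C U) → linkedPoints f Y C U = ∅

theorem isFiberSplitting_of_isTopologicalBasis {f : X → Z} {Y : Set X} {b : Set (Set X)}
    (hb : TopologicalSpace.IsTopologicalBasis b)
    (hY : ∀ C : Set (Set X), C.Finite → C ⊆ b → ∀ U ∈ b,
      InjOn f (linkedPoints f Y C U) → linkedPoints f Y C U = ∅) :
    IsFiberSplitting f Y := by
  intro C hC hCopen U hU hinj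
  by_contra! hne
  obtain ⟨x, ⟨hxU, hxY⟩, hlink⟩ := hne
  obtain ⟨U', hU'b, hxU', hU'U⟩ := hb.exists_subset_of_mem_open hxU hU
  have hshrink : ∀ W : C, ∃ W' ∈ b, W' ⊆ W ∧ ∃ y ∈ W' ∩ Y, f x = f y := by
    rintro ⟨W, hW⟩
    obtain ⟨y, ⟨hyW, hyY⟩, hxy⟩ := hlink W hW
    obtain ⟨W', hW'b, hyW', hW'W⟩ := hb.exists_subset_of_mem_open hyW (hCopen W hW)
    exact ⟨W', hW'b, hW'W, y, ⟨hyW', hyY⟩, hxy⟩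
  choose W' hW'b hW'W hW' using hshrink
  have := hC.to_subtype
  have hsub : linkedPoints f Y (range W') U' ⊆ linkedPoints f Y C U := fun z hz =>
    ⟨⟨hU'U hz.1.1, hz.1.2⟩, fun W hW =>
      let ⟨y, hy, hzy⟩ := hz.2 _ (mem_range_self ⟨W, hW⟩)
      ⟨y, ⟨hW'W _ hy.1, hy.2⟩, hzy⟩⟩
  have hempty := hY (range W') (finite_range W') (range_subset_iff.2 hW'b) U' hU'b (hinj.mono hsub)
  exact hempty.subset ⟨⟨hxU', hxY⟩, forall_mem_range.2 hW'⟩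

theorem IsFiberSplitting.exists_mem_fiberSequences_ne {f : X → Z} {Y : Set X}
    (hY : IsFiberSplitting f Y) {x : ℕ → X} (hx : x ∈ fiberSequences f Y) {V : Set (ℕ → X)}
    (hV : IsOpen V) (hxV : x ∈ V) (i : ℕ) {U : Set X} (hU : IsOpen U) (hxU : x i ∈ U) :
    ∃ w ∈ fiberSequences f Y, w ∈ V ∧ ∃ m, w m ∈ U ∧ w m ≠ w i := by
  obtain ⟨F, u, hu, hFV⟩ := isOpen_pi_iff.1 hV x hxV
  let U' : Set X := U ∩ {y | i ∈ F → y ∈ u i}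
  have hU' : IsOpen U' := by
    by_cases hi : i ∈ F
    · simpa [U', hi] using hU.inter (hu i hi).1
    · simpa [U', hi] using hU
  have hxlink : x i ∈ linkedPoints f Y (u '' F) U' :=
    ⟨⟨⟨hxU, fun hi => (hu i hi).2⟩, hx.1 i⟩,
      forall_mem_image.2 fun k hk => ⟨x k, ⟨(hu k hk).2, hx.1 k⟩, hx.2 i k⟩⟩
  have hninj : ¬InjOn f (linkedPoints f Y (u '' F) U') := fun hinj =>
    notMem_empty (x i) <| hY _ (F.finite_toSet.image u)
      (forall_mem_image.2 fun k hk => (hu k hk).1) U' hU' hinj ▸ hxlink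
  obtain ⟨a, ha, a', ha', hfa, hne⟩ : ∃ a ∈ linkedPoints f Y (u '' F) U',
      ∃ a' ∈ linkedPoints f Y (u '' F) U', f a = f a' ∧ a ≠ a' := by
    simpa [InjOn] using hninj
  obtain ⟨m, hm⟩ := Infinite.exists_notMem_finset (insert i F)
  obtain ⟨hmi, hmF⟩ : m ≠ i ∧ m ∉ F := by simpa using hm
  obtain ⟨w, hw, hwF, rfl, rfl⟩ := exists_mem_fiberSequences_of_mem_linkedPoints ha ha'.1.2 hfa
    ha.1.1.2 hmi hmF
  exact ⟨w, hw, hFV hwF, m, ha'.1.1.1, hne.symm⟩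

/- In the Polish space of limits of sequences lying in one fiber of `Y`, the generic sequence
accumulates at each of its own terms. -/
theorem IsFiberSplitting.exists_preperfect_range [PolishSpace X] {f : X → Z} {Y : Set X}
    (hY : IsFiberSplitting f Y) (hne : Y.Nonempty) :
    ∃ x ∈ closure (fiberSequences f Y), Preperfect (range x) := by
  let _ := TopologicalSpace.upgradeIsCompletelyMetrizable X
  let P := closure (fiberSequences f Y)
  have : PolishSpace P := isClosed_closure.polishSpace
  obtain ⟨y, hy⟩ := hne
  have : Nonempty P := ⟨⟨fun _ => y, subset_closure ⟨fun _ => hy, fun _ _ => rfl⟩⟩⟩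
  let O (p : ℕ × ℕ) : Set (ℕ → X) :=
    {x | ∃ m, dist (x m) (x p.1) < 1 / (p.2 + 1) ∧ x m ≠ x p.1}
  have hOopen : ∀ p, IsOpen (O p) := by
    intro p
    simp only [O, ofPred_exists]
    exact isOpen_iUnion fun m => IsOpen.inter
      (isOpen_lt ((continuous_apply m).dist (continuous_apply p.1)) continuous_const)
      (isOpen_ne_fun (continuous_apply m) (continuous_apply p.1))
  have hOdense : ∀ p, Dense (Subtype.val ⁻¹' O p : Set P) := by
    rintro ⟨i, n⟩
    rw [dense_iff_inter_open]
    rintro _ ⟨V, hV, rfl⟩ ⟨⟨x', hx'⟩, hx'V⟩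
    obtain ⟨x, hxV, hx⟩ := mem_closure_iff.1 hx' V hV hx'V
    let U := Metric.ball (x i) (1 / (n + 1) / 2)
    have hxU : x i ∈ U := Metric.mem_ball_self (by positivity)
    have hUi : IsOpen {w : ℕ → X | w i ∈ U} := Metric.isOpen_ball.preimage (continuous_apply i)
    obtain ⟨w, hw, ⟨hwV, hwi⟩, m, hwm, hmi⟩ := hY.exists_mem_fiberSequences_ne hx
      (hV.inter hUi) ⟨hxV, hxU⟩ i Metric.isOpen_ball hxU
    refine ⟨⟨w, subset_closure hw⟩, hwV, m, ?_, hmi⟩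
    calc dist (w m) (w i) ≤ dist (w m) (x i) + dist (w i) (x i) := dist_triangle_right _ _ _
      _ < 1 / (n + 1) / 2 + 1 / (n + 1) / 2 := add_lt_add hwm hwi
      _ = 1 / (n + 1) := add_halves _
  obtain ⟨x, hx⟩ := (dense_iInter_of_isOpen
    (fun p => (hOopen p).preimage continuous_subtype_val) hOdense).nonempty
  refine ⟨x, x.2, preperfect_iff_nhds.2 ?_⟩
  rintro _ ⟨i, rfl⟩ U hU
  obtain ⟨ε, hε, hball⟩ := Metric.mem_nhds_iff.1 hU
  obtain ⟨n, hn⟩ := exists_nat_one_div_lt hε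
  obtain ⟨m, hm, hne⟩ := mem_iInter.1 hx (i, n)
  exact ⟨x.1 m, ⟨hball (hm.trans hn), mem_range_self m⟩, hne⟩

variable [TopologicalSpace Z] [T2Space Z] {f : X → Z}

theorem apply_eq_of_mem_closure_fiberSequences (hf : Continuous f) {Y : Set X} {x : ℕ → X}
    (hx : x ∈ closure (fiberSequences f Y)) (i j : ℕ) : f (x i) = f (x j) := by
  have hclosed : IsClosed {x : ℕ → X | f (x i) = f (x j)} :=
    isClosed_eq (hf.comp (continuous_apply i)) (hf.comp (continuous_apply j))
  exact closure_minimal (fun x hx => hx.2 i j) hclosed hx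

variable [PolishSpace X]

theorem IsFiberSplitting.exists_not_countable_preimage (hf : Continuous f) {Y : Set X}
    (hY : IsFiberSplitting f Y) (hne : Y.Nonempty) : ∃ z, ¬(f ⁻¹' {z}).Countable := by
  let _ := TopologicalSpace.upgradeIsCompletelyMetrizable X
  obtain ⟨x, hx, hpre⟩ := hY.exists_preperfect_range hne
  obtain ⟨g, hg, -, hginj⟩ := hpre.perfect_closure.exists_nat_bool_injection
    (range_nonempty x).closure
  have hfiber : closure (range x) ⊆ f ⁻¹' {f (x 0)} :=
    closure_minimal (range_subset_iff.2 fun i => apply_eq_of_mem_closure_fiberSequences hf hx i 0)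
      (isClosed_singleton.preimage hf)
  have hcantor : Uncountable (ℕ → Bool) := by
    rw [← Cardinal.aleph0_lt_mk_iff]
    simpa using Cardinal.cantor Cardinal.aleph0
  refine ⟨f (x 0), fun hcount => hcantor.not_countable ?_⟩
  exact countable_univ_iff.1 <| countable_of_injective_of_countable_image hginj.injOn <|
    hcount.mono (image_univ ▸ hg.trans hfiber)

theorem analyticSet_linkedPoints [MeasurableSpace X] [BorelSpace X] (hf : Continuous f) {Y : Set X}
    (hY : MeasurableSet Y) {C : Set (Set X)} (hC : C.Countable) (hCmeas : ∀ W ∈ C, MeasurableSet W)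
    {U : Set X} (hU : MeasurableSet U) : AnalyticSet (linkedPoints f Y C U) := by
  have hfiber : AnalyticSet {p : X × X | f p.1 = f p.2} :=
    (isClosed_eq hf.fst' hf.snd').analyticSet
  have := hC.to_subtype
  have hinter : AnalyticSet (⋂ i : Option C,
      i.elim (U ∩ Y) fun W : C => {x | ∃ y ∈ (W : Set X) ∩ Y, f x = f y}) :=
    AnalyticSet.iInter <| Option.rec (hU.inter hY).analyticSet fun W =>
      analyticSet_exists_mem_rel hfiber ((hCmeas W W.2).inter hY).analyticSet
  convert! hinter
  ext x
  simp only [linkedPoints, mem_iInter, Option.forall, Subtype.forall]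
  rfl

/- Deleting from `Y` a Borel set on which `f` is injective only shrinks the sets of linked points,
so each of the countably many pairs `(C, U)` of basic data has to be dealt with only once. -/
theorem exists_countable_injOn_isFiberSplitting_compl [MeasurableSpace X] [BorelSpace X]
    (hf : Continuous f) :
    ∃ 𝒜 : Set (Set X), 𝒜.Countable ∧ (∀ A ∈ 𝒜, MeasurableSet A ∧ InjOn f A) ∧
      IsFiberSplitting f (⋃₀ 𝒜)ᶜ := by
  let P (𝒜 : Set (Set X)) : Prop := 𝒜.Countable ∧ ∀ A ∈ 𝒜, MeasurableSet A ∧ InjOn f A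
  let b := TopologicalSpace.countableBasis X
  have hb : TopologicalSpace.IsTopologicalBasis b := TopologicalSpace.isBasis_countableBasis X
  have hbc : b.Countable := TopologicalSpace.countable_countableBasis X
  have hkill : ∀ p : {C | C.Finite ∧ C ⊆ b} × b, ∃ 𝒜, P 𝒜 ∧
      ∀ ℬ, P ℬ → linkedPoints f (⋃₀ ℬ)ᶜ p.1 p.2 = ∅ → linkedPoints f (⋃₀ 𝒜)ᶜ p.1 p.2 = ∅ := by
    intro p
    by_cases h : ∃ ℬ, P ℬ ∧ linkedPoints f (⋃₀ ℬ)ᶜ p.1 p.2 = ∅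
    · obtain ⟨𝒜, h𝒜, hempty⟩ := h
      exact ⟨𝒜, h𝒜, fun _ _ _ => hempty⟩
    · exact ⟨∅, ⟨countable_empty, by simp⟩, fun ℬ hℬ hempty => (h ⟨ℬ, hℬ, hempty⟩).elim⟩
  choose 𝒜 h𝒜 hmin using hkill
  have := hbc.to_subtype
  have := (countable_ofPred_finite_subset hbc).to_subtype
  have hcount : (⋃ p, 𝒜 p).Countable := countable_iUnion fun p => (h𝒜 p).1
  have hpieces : ∀ A ∈ ⋃ p, 𝒜 p, MeasurableSet A ∧ InjOn f A := fun A hA =>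
    let ⟨p, hp⟩ := mem_iUnion.1 hA
    (h𝒜 p).2 A hp
  refine ⟨⋃ p, 𝒜 p, hcount, hpieces, isFiberSplitting_of_isTopologicalBasis hb ?_⟩
  intro C hC hCb U hU hinj
  have hrest : MeasurableSet (⋃₀ ⋃ p, 𝒜 p)ᶜ :=
    (MeasurableSet.sUnion hcount fun A hA => (hpieces A hA).1).compl
  obtain ⟨B, hsub, hB, hBinj⟩ := exists_measurableSet_superset_injOn hf
    (analyticSet_linkedPoints hf hrest hC.countable
      (fun W hW => (hb.isOpen (hCb hW)).measurableSet) (hb.isOpen hU).measurableSet) hinj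
  have hP : P (insert B (⋃ p, 𝒜 p)) :=
    ⟨hcount.insert B, forall_mem_insert.2 ⟨⟨hB, hBinj⟩, hpieces⟩⟩
  have hempty : linkedPoints f (⋃₀ insert B (⋃ p, 𝒜 p))ᶜ C U = ∅ := by
    rw [sUnion_insert, compl_union]
    exact eq_empty_of_forall_notMem fun x hx =>
      hx.1.2.1 (hsub (linkedPoints_mono_left inter_subset_right C U hx))
  refine subset_eq_empty (linkedPoints_mono_left (compl_subset_compl.2 ?_) C U)
    (hmin (⟨C, hC, hCb⟩, ⟨U, hU⟩) _ hP hempty)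
  exact sUnion_subset_sUnion (subset_iUnion 𝒜 _)

end FiberSplitting

section Coloring

theorem exists_measurable_nat_coloring_subordinate [MeasurableSpace X] {𝒜 : Set (Set X)}
    (h𝒜 : 𝒜.Countable) (hmeas : ∀ A ∈ 𝒜, MeasurableSet A) (hcover : ⋃₀ 𝒜 = univ) :
    ∃ c : X → ℕ, Measurable c ∧ ∀ ⦃x y⦄, c x = c y → ∃ A ∈ 𝒜, x ∈ A ∧ y ∈ A := by
  classical
  rcases 𝒜.eq_empty_or_nonempty with rfl | hne
  · have : IsEmpty X := univ_eq_empty_iff.1 (by rw [← hcover, sUnion_empty])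
    exact ⟨fun _ => 0, measurable_const, fun x => isEmptyElim x⟩
  obtain ⟨A, rfl⟩ := h𝒜.exists_eq_range hne
  have hex : ∀ x, ∃ n, x ∈ A n := by simpa [eq_univ_iff_forall] using hcover
  refine ⟨fun x => Nat.find (hex x),
    measurable_find hex fun n => hmeas _ (mem_range_self n), fun x y hxy => ?_⟩
  have hxy' : Nat.find (hex x) = Nat.find (hex y) := hxy
  exact ⟨_, mem_range_self _, Nat.find_spec (hex x), hxy' ▸ Nat.find_spec (hex y)⟩

theorem exists_countable_cover_injOn_of_continuous {Z : Type*} [TopologicalSpace X] [PolishSpace X]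
    [MeasurableSpace X] [BorelSpace X] [TopologicalSpace Z] [T2Space Z] {f : X → Z}
    (hf : Continuous f) (hfiber : ∀ z, (f ⁻¹' {z}).Countable) :
    ∃ 𝒜 : Set (Set X), 𝒜.Countable ∧ (∀ A ∈ 𝒜, MeasurableSet A ∧ InjOn f A) ∧ ⋃₀ 𝒜 = univ := by
  obtain ⟨𝒜, h𝒜, hpieces, hsplit⟩ := exists_countable_injOn_isFiberSplitting_compl hf
  refine ⟨𝒜, h𝒜, hpieces, compl_empty_iff.1 (not_nonempty_iff_eq_empty.1 fun hne => ?_)⟩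
  obtain ⟨z, hz⟩ := hsplit.exists_not_countable_preimage hf hne
  exact hz (hfiber z)

variable [MeasurableSpace X] [StandardBorelSpace X]

theorem exists_polishSpace_borelSpace_continuous {Z : Type*} [TopologicalSpace Z]
    [SecondCountableTopology Z] [MeasurableSpace Z] [OpensMeasurableSpace Z] {f : X → Z}
    (hf : Measurable f) :
    ∃ _ : TopologicalSpace X, PolishSpace X ∧ BorelSpace X ∧ Continuous f := by
  let t₀ := upgradeStandardBorel X
  obtain ⟨t, ht, hcont, hpolish⟩ := hf.exists_continuous
  exact ⟨t, hpolish, @BorelSpace.mk X t _ <|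
    t₀.toBorelSpace.measurable_eq.trans (borel_eq_borel_of_le hpolish t₀.toPolishSpace ht).symm,
    hcont⟩

theorem exists_measurable_nat_coloring_prodMk_injective {Z : Type*} [MeasurableSpace Z]
    [MeasurableSpace.CountablySeparated Z] {f : X → Z} (hf : Measurable f)
    (hfiber : ∀ z, (f ⁻¹' {z}).Countable) :
    ∃ c : X → ℕ, Measurable c ∧ Function.Injective fun x => (f x, c x) := by
  obtain ⟨g, hg, hginj⟩ := MeasurableSpace.measurable_injection_nat_bool_of_countablySeparated Z
  obtain ⟨_, _, _, hcont⟩ := exists_polishSpace_borelSpace_continuous (hg.comp hf)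
  have hfiber' : ∀ w, (g ∘ f ⁻¹' {w}).Countable := fun w => by
    rw [preimage_comp, ← biUnion_preimage_singleton]
    exact (subsingleton_singleton.preimage hginj).countable.biUnion fun z _ => hfiber z
  obtain ⟨𝒜, h𝒜, hpieces, hcover⟩ := exists_countable_cover_injOn_of_continuous hcont hfiber'
  obtain ⟨c, hc, hcol⟩ :=
    exists_measurable_nat_coloring_subordinate h𝒜 (fun A hA => (hpieces A hA).1) hcover
  refine ⟨c, hc, fun x y hxy => ?_⟩
  obtain ⟨A, hA, hxA, hyA⟩ := hcol (Prod.ext_iff.1 hxy).2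
  exact (hpieces A hA).2 hxA hyA (congrArg g (Prod.ext_iff.1 hxy).1)

theorem exists_measurable_nat_coloring_apply_ne {φ : X → X} (hφ : Measurable φ) :
    ∃ d : X → ℕ, Measurable d ∧ ∀ x, d (φ x) = d x → φ x = x := by
  let _ := upgradeStandardBorel X
  let b := TopologicalSpace.countableBasis X
  have hb : TopologicalSpace.IsTopologicalBasis b := TopologicalSpace.isBasis_countableBasis X
  let 𝒜 : Set (Set X) := insert {x | φ x = x} ((fun W => W \ φ ⁻¹' W) '' b)
  have hmeas : ∀ A ∈ 𝒜, MeasurableSet A :=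
    forall_mem_insert.2 ⟨measurableSet_eq_fun hφ measurable_id, forall_mem_image.2 fun W hW =>
      (hb.isOpen hW).measurableSet.diff (hφ (hb.isOpen hW).measurableSet)⟩
  have hcover : ⋃₀ 𝒜 = univ := by
    refine eq_univ_of_forall fun x => ?_
    by_cases hx : φ x = x
    · exact ⟨_, mem_insert _ _, hx⟩
    · obtain ⟨W, hW, hxW, hsub⟩ := hb.exists_subset_of_mem_open
        (show x ∈ ({φ x}ᶜ : Set X) from Ne.symm hx) isOpen_compl_singleton
      exact ⟨_, mem_insert_of_mem _ (mem_image_of_mem _ hW), hxW, fun h => hsub h rfl⟩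
  obtain ⟨d, hd, hcol⟩ := exists_measurable_nat_coloring_subordinate
    (((TopologicalSpace.countable_countableBasis X).image _).insert _) hmeas hcover
  refine ⟨d, hd, fun x hx => ?_⟩
  obtain ⟨A, rfl | ⟨W, -, rfl⟩, hφxA, hxA⟩ := hcol hx
  · exact hxA
  · exact (hxA.2 hφxA.1).elim

end Coloring

section Swap

theorem tsum_inter_preimage_singleton {Y M : Type*} [AddCommMonoid M] [TopologicalSpace M]
    {φ : X → Y} {T : Y → X} {A : Set X} (hT : LeftInvOn T φ A) (g : X → Y → M) (y : Y) :
    ∑' x : ↥(A ∩ φ ⁻¹' {y}), g x y = (φ '' A).indicator (fun y => g (T y) y) y := by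
  by_cases hy : y ∈ φ '' A
  · obtain ⟨a, ha, rfl⟩ := hy
    have hsing : A ∩ φ ⁻¹' {φ a} = {a} :=
      Subset.antisymm (fun x hx => hT.injOn hx.1 ha hx.2) (singleton_subset_iff.2 ⟨ha, rfl⟩)
    rw [indicator_of_mem (mem_image_of_mem φ ha), hT ha, hsing]
    exact tsum_singleton a fun x => g x (φ a)
  · have hempty : A ∩ φ ⁻¹' {y} = ∅ :=
      eq_empty_of_forall_notMem fun x hx => hy ⟨x, hx.1, hx.2⟩
    rw [indicator_of_notMem hy, hempty, tsum_empty]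

variable [MeasurableSpace X] [StandardBorelSpace X] {φ : X → X} {A : Set X}

theorem exists_measurableEquiv_eqOn_leftInvOn (hφ : Measurable φ) (hA : MeasurableSet A)
    (hinj : InjOn φ A) (hfix : ∀ x ∈ A, φ x ∈ A → φ x = x) :
    ∃ T : X ≃ᵐ X, EqOn T φ A ∧ LeftInvOn T φ A ∧ EqOn T id (A ∪ φ '' A)ᶜ := by
  classical
  let T : X → X := A.piecewise φ (Function.extend (A.domRestrict φ) Subtype.val id)
  have hinj' : Function.Injective (A.domRestrict φ) := injOn_iff_injective.1 hinj
  have := hA.standardBorel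
  have hTmeas : Measurable T := hφ.piecewise hA <|
    ((hφ.comp measurable_subtype_coe).measurableEmbedding hinj').measurable_extend
      measurable_subtype_coe measurable_id
  have hTA : EqOn T φ A := piecewise_eqOn A _ _
  have hTφ : LeftInvOn T φ A := by
    intro x hx
    by_cases hφx : φ x ∈ A
    · rw [hfix x hx hφx, hTA hx, hfix x hx hφx]
    · exact (piecewise_eq_of_notMem A _ _ hφx).trans (hinj'.extend_apply _ _ (⟨x, hx⟩ : A))
  have hTid : EqOn T id (A ∪ φ '' A)ᶜ := by
    intro x hx
    rw [mem_compl_iff, mem_union, not_or] at hx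
    exact (piecewise_eq_of_notMem A _ _ hx.1).trans
      (Function.extend_apply' _ _ _ fun ⟨a, ha⟩ => hx.2 ⟨a, a.2, ha⟩)
  have hTT : Function.Involutive T := by
    intro x
    by_cases hx : x ∈ A ∪ φ '' A
    · rcases hx with hx | ⟨a, ha, rfl⟩
      · rw [hTA hx, hTφ hx]
      · rw [hTφ ha, hTA ha]
    · rw [hTid hx, id, hTid hx, id]
  exact ⟨⟨hTT.toPerm, hTmeas, hTmeas⟩, hTA, hTφ, hTid⟩

theorem measure_inter_preimage_eq_setLIntegral {E : X → X → Prop} (hrefl : ∀ x, E x x)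
    (hsymm : ∀ ⦃x y⦄, E x y → E y x) {r : X → X → ℝ≥0∞} (hr : Measurable (Function.uncurry r))
    {μ : Measure X} (hμ : ∀ T : X ≃ᵐ X, (∀ x, E (T x) x) → ∀ B, MeasurableSet B →
      μ (T '' B) = ∫⁻ x in B, r (T x) x ∂μ)
    (hφ : Measurable φ) (hφE : ∀ x, E x (φ x)) (hA : MeasurableSet A) (hinj : InjOn φ A)
    (hfix : ∀ x ∈ A, φ x ∈ A → φ x = x) {B : Set X} (hB : MeasurableSet B) :
    Measurable (fun x => ∑' y : ↥(A ∩ φ ⁻¹' {x}), r y x) ∧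
      μ (A ∩ φ ⁻¹' B) = ∫⁻ x in B, ∑' y : ↥(A ∩ φ ⁻¹' {x}), r y x ∂μ := by
  obtain ⟨T, hTA, hTφ, hTid⟩ := exists_measurableEquiv_eqOn_leftInvOn hφ hA hinj hfix
  have hTE : ∀ x, E (T x) x := by
    intro x
    by_cases hx : x ∈ A ∪ φ '' A
    · rcases hx with hx | ⟨a, ha, rfl⟩
      · exact hTA hx ▸ hsymm (hφE x)
      · exact (hTφ ha).symm ▸ hφE a
    · exact (hTid hx).symm ▸ hrefl x
  have himage : MeasurableSet (φ '' A) := hA.image_of_measurable_injOn hφ hinj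
  have hpiece : A ∩ φ ⁻¹' B = T '' (φ '' A ∩ B) := by
    rw [← image_inter_preimage]
    exact (hTφ.mono inter_subset_left).image_image.symm
  simp only [tsum_inter_preimage_singleton hTφ]
  refine ⟨(hr.comp (T.measurable.prodMk measurable_id)).indicator himage, ?_⟩
  rw [hpiece, hμ T hTE _ (himage.inter hB), setLIntegral_indicator himage]

end Swap

section Fiberwise

theorem tsum_eq_tsum_tsum_preimage_singleton_inter {ι : Type*} (k : X → ι) (S : Set X)
    (g : X → ℝ≥0∞) : ∑' x : S, g x = ∑' i, ∑' x : ↥(k ⁻¹' {i} ∩ S), g x := by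
  have hdisj : univ.PairwiseDisjoint fun i => k ⁻¹' {i} ∩ S :=
    (pairwiseDisjoint_fiber k univ).mono fun _ => inter_subset_left
  have hunion : S = ⋃ i, k ⁻¹' {i} ∩ S := by
    rw [← iUnion_inter, ← preimage_iUnion, iUnion_of_singleton, preimage_univ, univ_inter]
  rw [← ENNReal.tsum_biUnion hdisj]
  exact tsum_congr_set_coe g hunion

theorem measure_eq_tsum_preimage_singleton_inter [MeasurableSpace X] {ι : Type*} [Countable ι]
    {k : X → ι} (hk : ∀ i, MeasurableSet (k ⁻¹' {i})) (μ : Measure X) (S : Set X) :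
    μ S = ∑' i, μ (k ⁻¹' {i} ∩ S) :=
  calc μ S = μ.restrict S (⋃ i, k ⁻¹' {i}) := by
        rw [← preimage_iUnion, iUnion_of_singleton, preimage_univ, Measure.restrict_apply_univ]
    _ = ∑' i, μ.restrict S (k ⁻¹' {i}) := measure_iUnion (pairwise_disjoint_fiber k) hk
    _ = ∑' i, μ (k ⁻¹' {i} ∩ S) := tsum_congr fun i => Measure.restrict_apply (hk i)

end Fiberwise

theorem stmt9_general [MeasurableSpace X] [StandardBorelSpace X] {E : X → X → Prop}
    (hrefl : ∀ x, E x x) (hsymm : ∀ ⦃x y⦄, E x y → E y x) {r : X → X → ℝ≥0∞}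
    (hr : Measurable (Function.uncurry r)) {μ : Measure X}
    (hμ : ∀ T : X ≃ᵐ X, (∀ x, E (T x) x) → ∀ B, MeasurableSet B →
      μ (T '' B) = ∫⁻ x in B, r (T x) x ∂μ)
    {φ : X → X} (hφ : Measurable φ) (hφE : ∀ x, E x (φ x)) (hfiber : ∀ x, (φ ⁻¹' {x}).Countable)
    {B : Set X} (hB : MeasurableSet B) :
    μ (φ ⁻¹' B) = ∫⁻ x in B, ∑' y : φ ⁻¹' {x}, r y x ∂μ := by
  obtain ⟨c, hc, hcinj⟩ := exists_measurable_nat_coloring_prodMk_injective hφ hfiber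
  obtain ⟨d, hd, hdfix⟩ := exists_measurable_nat_coloring_apply_ne hφ
  let k : X → ℕ × ℕ := fun x => (c x, d x)
  have hk : ∀ n, MeasurableSet (k ⁻¹' {n}) := fun n => (hc.prodMk hd) (measurableSet_singleton n)
  have hpiece := fun n => measure_inter_preimage_eq_setLIntegral hrefl hsymm hr hμ hφ hφE (hk n)
    (fun x hx y hy hxy => hcinj (Prod.ext hxy (congrArg Prod.fst (hx.trans hy.symm))))
    (fun x hx hφx => hdfix x (congrArg Prod.snd (hφx.trans hx.symm))) hB
  calc μ (φ ⁻¹' B) = ∑' n, μ (k ⁻¹' {n} ∩ φ ⁻¹' B) :=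
        measure_eq_tsum_preimage_singleton_inter hk μ (φ ⁻¹' B)
    _ = ∑' n, ∫⁻ x in B, ∑' y : ↥(k ⁻¹' {n} ∩ φ ⁻¹' {x}), r y x ∂μ :=
        tsum_congr fun n => (hpiece n).2
    _ = ∫⁻ x in B, ∑' n, ∑' y : ↥(k ⁻¹' {n} ∩ φ ⁻¹' {x}), r y x ∂μ :=
        (lintegral_tsum fun n => (hpiece n).1.aemeasurable).symm
    _ = ∫⁻ x in B, ∑' y : φ ⁻¹' {x}, r y x ∂μ :=
        lintegral_congr fun x =>
          (tsum_eq_tsum_tsum_preimage_singleton_inter k (φ ⁻¹' {x}) fun y => r y x).symm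

/-- For a `ρ`-invariant measure `μ`, `μ(φ⁻¹(B)) = ∫_B |φ⁻¹(x)|^x_ρ dμ(x)` for all Borel
`B ⊆ X` and Borel `φ : X → X` whose graph is contained in `E`. -/
theorem stmt9 [MeasurableSpace X] [StandardBorelSpace X]
    (E : X → X → Prop) (hE : IsCBER E)
    (ρ : X → X → ℝ) (hρ : IsCocycle E ρ)
    (μ : Measure X) (hμ : IsInvariant E ρ μ) :
    ∀ B : Set X, MeasurableSet B → ∀ φ : X → X, Measurable φ → (∀ x, E x (φ x)) →
      μ (φ ⁻¹' B) = ∫⁻ x in B, eSize ρ (φ ⁻¹' {x}) x ∂μ := by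
  intro _ hB φ hφ hφE
  exact stmt9_general hE.1.refl (fun _ _ => hE.1.symm)
    (r := fun x y => ENNReal.ofReal (ρ x y)) (ENNReal.measurable_ofReal.comp hρ.1) hμ hφ hφE
    (fun x => (hE.2.2 x).mono fun y hy => hy ▸ hE.1.symm (hφE y)) hB

end CocycleNadkarni
end

section
/- Let X be a standard Borel space, E a countable Borel equivalence relation on X, and ρ : E → (0,∞) a Borel cocycle. If there is a Borel compression φ : X → X of ρ over a finite Borel subequivalence relation F of E, then there is no ρ-invariant Borel probability measure on X. -/
open MeasureTheory Set ENNReal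

namespace CocycleNadkarni

variable {X : Type*} {Γ : Type*}

/-!
For every `ψ : X → X` that moves points inside their `E`-classes, invariance of `μ` gives
`∫ |ψ⁻¹(z)|^z_ρ dμ(z) = μ(X)`. Let `t` select one point from each `F`-class and compare `ψ = t`
with `ψ = t ∘ φ`: at `z = t(x)` the integrands are `|[x]_F|^z_ρ` and `|φ⁻¹([x]_F)|^z_ρ`, so the
second is at most the first because `φ` is a compression, while both have integral `μ(X) < ∞`.
Hence they agree almost everywhere, and even on whole `E`-classes, since `E`-saturations of null
sets are null. This leaves no room for the strict inequality that the compression produces in every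
class.

Uniformization of Borel sets is only ever needed up to null sets, where it follows from
disintegration (countable fibres, in place of Lusin–Novikov) and from capacitability (measurable
selection on a set of positive measure, measurability of projections).
-/

section Analytic

theorem exists_lt_measure_image_box {α : Type*} [MeasurableSpace α] (μ : Measure α)
    (g : (ℕ → ℕ) → α) {c : ℝ≥0∞} (hc : c < μ (range g)) :
    ∃ b : ℕ → ℕ, ∀ n, c < μ (g '' {x | ∀ i < n, x i ≤ b i}) := by
  have bound_coordinate (V : {V : Set (ℕ → ℕ) // c < μ (g '' V)}) (n : ℕ) :
      ∃ k, c < μ (g '' (V.1 ∩ {x | x n ≤ k})) := by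
    have hmono : Monotone fun k : ℕ => g '' (V.1 ∩ {x | x n ≤ k}) := fun _ _ hkl =>
      image_mono (inter_subset_inter_right _ fun _ hx => le_trans hx hkl)
    have hunion : ⋃ k : ℕ, {x : ℕ → ℕ | x n ≤ k} = univ :=
      iUnion_eq_univ_iff.2 fun x => ⟨x n, by simp⟩
    rw [← lt_iSup_iff, ← hmono.measure_iUnion, ← image_iUnion, ← inter_iUnion, hunion, inter_univ]
    exact V.2
  choose k hk using bound_coordinate
  let V : ℕ → {V : Set (ℕ → ℕ) // c < μ (g '' V)} :=
    Nat.rec ⟨univ, by rwa [image_univ]⟩ fun n V => ⟨V.1 ∩ {x | x n ≤ k V n}, hk V n⟩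
  refine ⟨fun n => k (V n) n, fun n => ?_⟩
  have hV : (V n).1 = {x | ∀ i < n, x i ≤ k (V i) i} := by
    induction n with
    | zero => simp [V]
    | succ n ih =>
      ext x
      simp only [mem_ofPred_eq, Nat.forall_lt_succ_right, V]
      exact and_congr_left fun _ => Set.ext_iff.1 ih x
  exact hV ▸ (V n).2

theorem exists_box_subset_of_isOpen {b : ℕ → ℕ} {V : Set (ℕ → ℕ)} (hV : IsOpen V)
    (hbV : Iic b ⊆ V) : ∃ n, {x | ∀ i < n, x i ≤ b i} ⊆ V := by
  let : MetricSpace (ℕ → ℕ) := PiNat.metricSpaceNatNat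
  have hcompact : IsCompact (Iic b) := Icc_bot (a := b) ▸ isCompact_Icc
  obtain ⟨δ, hδ, hthick⟩ := hcompact.exists_thickening_subset_open hV hbV
  obtain ⟨n, hn⟩ := exists_pow_lt_of_lt_one hδ (one_half_lt_one (α := ℝ))
  refine ⟨n, fun x hx => hthick (Metric.mem_thickening_iff.2 ⟨x ⊓ b, mem_Iic.2 inf_le_right, ?_⟩)⟩
  refine lt_of_le_of_lt (PiNat.mem_cylinder_iff_dist_le.1 ?_) hn
  exact fun i hi => (min_eq_left (hx i hi)).symm

/-- Choquet's capacitability argument: the boxes `x i ≤ b i` for `i < n` decrease to the compact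
box `Iic b`, and outer regularity keeps the measure of its image from dropping in the limit. -/
theorem exists_isCompact_le_measure_image {α : Type*} [TopologicalSpace α] [MeasurableSpace α]
    (μ : Measure α) [μ.OuterRegular] {g : (ℕ → ℕ) → α} (hg : Continuous g) {c : ℝ≥0∞}
    (hc : c < μ (range g)) : ∃ K, IsCompact K ∧ c ≤ μ (g '' K) := by
  obtain ⟨b, hb⟩ := exists_lt_measure_image_box μ g hc
  refine ⟨Iic b, Icc_bot (a := b) ▸ isCompact_Icc, le_of_not_gt fun hlt => ?_⟩
  obtain ⟨O, hKO, hO, hOc⟩ := Set.exists_isOpen_lt_of_lt _ c hlt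
  obtain ⟨n, hn⟩ := exists_box_subset_of_isOpen (hO.preimage hg) (image_subset_iff.1 hKO)
  exact ((hb n).trans_le (measure_mono (image_subset_iff.2 hn))).not_ge hOc.le

theorem nullMeasurableSet_of_analyticSet {α : Type*} [TopologicalSpace α] [T2Space α]
    [MeasurableSpace α] [BorelSpace α] (μ : Measure α) [IsFiniteMeasure μ] [μ.OuterRegular]
    {s : Set α} (hs : AnalyticSet s) : NullMeasurableSet s μ := by
  rw [AnalyticSet] at hs
  obtain rfl | ⟨g, hg, rfl⟩ := hs
  · exact nullMeasurableSet_empty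
  obtain hzero | hpos := eq_or_ne (μ (range g)) 0
  · exact NullMeasurableSet.of_null hzero
  obtain ⟨u, -, hu, hlim⟩ := exists_seq_strictMono_tendsto' (pos_iff_ne_zero.2 hpos)
  choose K hK huK using fun n => exists_isCompact_le_measure_image μ hg (hu n).2
  have hmeas : NullMeasurableSet (⋃ n, g '' K n) μ :=
    .iUnion fun n => ((hK n).image hg).measurableSet.nullMeasurableSet
  have hle : μ (range g) ≤ μ (⋃ n, g '' K n) :=
    le_of_tendsto' hlim fun n => (huK n).trans (measure_mono (subset_iUnion (g '' K ·) n))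
  exact hmeas.congr (ae_eq_of_subset_of_measure_ge
    (iUnion_subset fun n => image_subset_range g (K n)) hle hmeas (measure_ne_top μ _))

theorem nullMeasurableSet_image {α β : Type*} [MeasurableSpace α] [StandardBorelSpace α]
    [MeasurableSpace β] [StandardBorelSpace β] (μ : Measure α) [IsFiniteMeasure μ] {f : β → α}
    (hf : Measurable f) {s : Set β} (hs : MeasurableSet s) : NullMeasurableSet (f '' s) μ := by
  let := upgradeStandardBorel α
  let := upgradeStandardBorel β
  exact nullMeasurableSet_of_analyticSet μ (hs.analyticSet_image hf)

theorem exists_continuous_injective_real : ∃ j : (ℕ → ℕ) → ℝ, Continuous j ∧ j.Injective := by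
  let graph (x : ℕ → ℕ) : ℕ → ℕ → Bool := fun n k => x n == k
  have hgraph : Continuous graph := continuous_pi fun n => continuous_pi fun k =>
    (continuous_of_discreteTopology (f := fun m => m == k)).comp (continuous_apply n)
  have hinj : graph.Injective := fun x y hxy => funext fun n => by
    have hbeq : (x n == x n) = (y n == x n) := congrFun (congrFun hxy n) (x n)
    exact (beq_iff_eq.1 (hbeq.symm.trans (beq_self_eq_true _))).symm
  let e : (ℕ → ℕ → Bool) ≃ₜ cantorSet :=
    cantorSpaceHomeomorphNatToCantorSpace.symm.trans cantorSetHomeomorphNatToBool.symm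
  exact ⟨fun x => e (graph x), continuous_subtype_val.comp (e.continuous.comp hgraph),
    Subtype.val_injective.comp (e.injective.comp hinj)⟩

theorem exists_measurable_rightInvOn_image {Z α : Type*} [TopologicalSpace Z] [PolishSpace Z]
    [Nonempty Z] [MeasurableSpace Z] [BorelSpace Z] [TopologicalSpace α] [T2Space α]
    [MeasurableSpace α] [BorelSpace α] {j : Z → ℝ} (hj : Continuous j) (hji : j.Injective)
    {K : Set Z} (hK : IsCompact K) {f : Z → α} (hf : Continuous f) :
    ∃ σ : α → Z, Measurable σ ∧ RightInvOn σ f (f '' K) := by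
  have exists_least (y : f '' K) : ∃ z ∈ K ∩ f ⁻¹' {y.1}, IsMinOn j (K ∩ f ⁻¹' {y.1}) z :=
    (hK.inter_right (isClosed_singleton.preimage hf)).exists_isMinOn y.2 hj.continuousOn
  choose σ hσ hmin using exists_least
  have hσmeas : Measurable σ := by
    rw [← (hj.measurable.measurableEmbedding hji).measurable_comp_iff]
    refine measurable_of_Iic fun q => ?_
    have hpre : j ∘ σ ⁻¹' Iic q = Subtype.val ⁻¹' (f '' (K ∩ j ⁻¹' Iic q)) := by
      ext y
      refine ⟨fun hy => ⟨σ y, ⟨(hσ y).1, hy⟩, (hσ y).2⟩, ?_⟩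
      rintro ⟨z, ⟨hzK, hzq⟩, hzy⟩
      exact mem_Iic.2 ((hmin y ⟨hzK, hzy⟩).trans (mem_Iic.1 (mem_preimage.1 hzq)))
    rw [hpre]
    exact measurable_subtype_coe
      ((hK.inter_right (isClosed_Iic.preimage hj)).image hf).measurableSet
  have hval := MeasurableEmbedding.subtype_coe (hK.image hf).measurableSet
  obtain ⟨τ, hτ, hτσ⟩ := hval.exists_measurable_extend hσmeas fun _ => inferInstance
  exact ⟨τ, hτ, fun y hy => (congrArg f (congrFun hτσ ⟨y, hy⟩)).trans (hσ ⟨y, hy⟩).2⟩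

theorem exists_measurable_selection {α β : Type*} [MeasurableSpace α] [StandardBorelSpace α]
    [MeasurableSpace β] [StandardBorelSpace β] (μ : Measure α) [IsFiniteMeasure μ]
    {R : Set (α × β)} (hR : MeasurableSet R) (hpos : μ (Prod.fst '' R) ≠ 0) :
    ∃ (B : Set α) (σ : α → β), MeasurableSet B ∧ μ B ≠ 0 ∧ Measurable σ ∧
      ∀ x ∈ B, (x, σ x) ∈ R := by
  let := upgradeStandardBorel α
  let := upgradeStandardBorel β
  have hanalytic := hR.analyticSet
  rw [AnalyticSet] at hanalytic
  obtain rfl | ⟨g, hg, rfl⟩ := hanalytic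
  · simp at hpos
  rw [← range_comp] at hpos
  have hfst : Continuous (Prod.fst ∘ g) := continuous_fst.comp hg
  obtain ⟨c, hc, hcμ⟩ := exists_between (pos_iff_ne_zero.2 hpos)
  obtain ⟨K, hK, hcK⟩ := exists_isCompact_le_measure_image μ hfst hcμ
  obtain ⟨j, hj, hji⟩ := exists_continuous_injective_real
  obtain ⟨σ, hσ, hright⟩ := exists_measurable_rightInvOn_image hj hji hK hfst
  refine ⟨Prod.fst ∘ g '' K, Prod.snd ∘ g ∘ σ, (hK.image hfst).measurableSet,
    (hc.trans_le hcK).ne', measurable_snd.comp (hg.measurable.comp hσ), fun x hx => ?_⟩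
  exact ⟨σ x, Prod.ext (hright hx) rfl⟩

end Analytic

section CountableFibers

open ProbabilityTheory TopologicalSpace

variable {Z Y : Type*} [MeasurableSpace Z] [StandardBorelSpace Z] [MeasurableSpace Y]

theorem measurable_kernel_singleton (κ : Kernel Y Z) [IsSFiniteKernel κ] :
    Measurable fun p : Y × Z => κ p.1 {p.2} := by
  have hdiag : MeasurableSet {q : (Y × Z) × Z | q.2 = q.1.2} :=
    measurableSet_eq_fun measurable_snd measurable_fst.snd
  exact Kernel.measurable_kernel_prodMk_left (κ := κ.comap Prod.fst measurable_fst) hdiag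

theorem ae_condDistrib_singleton_ne_zero [MeasurableEq Y] [Nonempty Z] (μ : Measure Z)
    [IsFiniteMeasure μ] {f : Z → Y} (hf : Measurable f) (hcount : ∀ y, (f ⁻¹' {y}).Countable) :
    ∀ᵐ z ∂μ, condDistrib id f μ (f z) {z} ≠ 0 := by
  have hmap : μ.map f ⊗ₘ condDistrib id f μ = μ.map fun z => (f z, id z) :=
    compProd_map_condDistrib measurable_id.aemeasurable
  have hpair : Measurable fun z => (f z, id z) := hf.prodMk measurable_id
  have hfib : ∀ᵐ y ∂μ.map f, ∀ᵐ z ∂condDistrib id f μ y, f z = y := by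
    refine Measure.ae_ae_of_ae_compProd (p := fun p : Y × Z => f p.2 = p.1) ?_
    rw [hmap]
    exact (ae_map_iff hpair.aemeasurable (measurableSet_eq_fun (hf.comp measurable_snd)
      measurable_fst)).2 (ae_of_all _ fun _ => rfl)
  have hatom : ∀ᵐ p ∂μ.map f ⊗ₘ condDistrib id f μ, condDistrib id f μ p.1 {p.2} ≠ 0 := by
    refine (Measure.ae_compProd_iff
      (measurable_kernel_singleton _ (measurableSet_singleton 0).compl)).2 ?_
    filter_upwards [hfib] with y hy
    have hnull : condDistrib id f μ y
        (⋃ z ∈ {z | f z = y ∧ condDistrib id f μ y {z} = 0}, {z}) = 0 :=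
      (measure_biUnion_null_iff ((hcount y).mono fun z hz => hz.1)).2 fun z hz => hz.2
    filter_upwards [hy, measure_eq_zero_iff_ae_notMem.1 hnull] with z hzy hz hzero
    exact hz (mem_biUnion (⟨hzy, hzero⟩ : z ∈ {z | _ ∧ _}) rfl)
  rw [hmap] at hatom
  exact ae_of_ae_map hpair.aemeasurable hatom

/-- In the disintegration of `μ` over `f` almost every point is an atom of its own fibre, and a
fibre carries at most one atom of more than half the mass of a given set. -/
theorem exists_seq_injOn_ae_mem [MeasurableEq Y] (μ : Measure Z) [IsFiniteMeasure μ] {f : Z → Y}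
    (hf : Measurable f) (hcount : ∀ y, (f ⁻¹' {y}).Countable) :
    ∃ B : ℕ → Set Z, (∀ n, MeasurableSet (B n)) ∧ (∀ n, InjOn f (B n)) ∧
      ∀ᵐ z ∂μ, ∃ n, z ∈ B n := by
  obtain _ | _ := isEmpty_or_nonempty Z
  · exact ⟨fun _ => ∅, by simp, by simp, ae_of_all _ isEmptyElim⟩
  let := upgradeStandardBorel Z
  let κ := condDistrib id f μ
  obtain ⟨U, hU⟩ := exists_seq_basis Z
  refine ⟨fun n => U n ∩ {z | κ (f z) (U n) < 2 * κ (f z) {z}}, fun n => ?_, ?_, ?_⟩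
  · have hUn : MeasurableSet (U n) := (hU.isOpen (mem_range_self n)).measurableSet
    exact hUn.inter (measurableSet_lt ((Kernel.measurable_coe κ hUn).comp hf)
      (((measurable_kernel_singleton κ).comp (hf.prodMk measurable_id)).const_mul 2))
  · rintro n z ⟨hz, hzlt⟩ w ⟨hw, hwlt⟩ hzw
    by_contra hne
    have hsum : κ (f z) {z} + κ (f z) {w} ≤ κ (f z) (U n) := by
      rw [← measure_union (disjoint_singleton.2 hne) (measurableSet_singleton w)]
      exact measure_mono (union_subset (singleton_subset_iff.2 hz) (singleton_subset_iff.2 hw))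
    rw [mem_ofPred_eq, ← hzw] at hwlt
    have := ENNReal.add_lt_add hzlt hwlt
    rw [← two_mul, ← mul_add] at this
    exact (this.trans_le (mul_le_mul_right hsum 2)).false
  · filter_upwards [ae_condDistrib_singleton_ne_zero μ hf hcount] with z hz
    have hlt : κ (f z) {z} < 2 * κ (f z) {z} := by
      rw [two_mul]
      exact ENNReal.lt_add_right (measure_ne_top _ _) hz
    obtain ⟨O, hzO, hO, hOlt⟩ := Set.exists_isOpen_lt_of_lt _ _ hlt
    obtain ⟨_, ⟨n, rfl⟩, hzn, hnO⟩ := hU.exists_subset_of_mem_open (hzO rfl) hO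
    exact ⟨n, hzn, (measure_mono hnO).trans_lt hOlt⟩

end CountableFibers

section PartialInjections

theorem exists_measurable_leftInvOn {Z Y : Type*} [MeasurableSpace Z] [StandardBorelSpace Z]
    [Nonempty Z] [MeasurableSpace Y] [MeasurableSpace.CountablySeparated Y] {T : Z → Y} {B : Set Z}
    (hT : Measurable T) (hB : MeasurableSet B) (hinj : InjOn T B) :
    ∃ S : Y → Z, Measurable S ∧ LeftInvOn S T B := by
  have := hB.standardBorel
  have hemb : MeasurableEmbedding (B.domRestrict T) :=
    (hT.comp measurable_subtype_coe).measurableEmbedding hinj.injective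
  obtain ⟨S, hS, hST⟩ := hemb.exists_measurable_extend measurable_subtype_coe fun _ => inferInstance
  exact ⟨S, hS, fun x hx => congrFun hST ⟨x, hx⟩⟩

variable [MeasurableSpace X] [StandardBorelSpace X] {T : X → X}

theorem exists_measurableEquiv_eqOn {C : Set X} (hC : MeasurableSet C) (hT : Measurable T)
    (hinj : InjOn T C) (hdisj : Disjoint C (T '' C)) :
    ∃ e : X ≃ᵐ X, EqOn e T C ∧
      ∀ x, e x = x ∨ (x ∈ C ∧ e x = T x) ∨ (e x ∈ C ∧ T (e x) = x) := by
  classical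
  obtain _ | _ := isEmpty_or_nonempty X
  · exact ⟨.refl X, fun x => isEmptyElim x, isEmptyElim⟩
  obtain ⟨S, hS, hST⟩ := exists_measurable_leftInvOn hT hC hinj
  let f : X → X := C.piecewise T ((T '' C).piecewise S id)
  have hfC {x : X} (hx : x ∈ C) : f x = T x := piecewise_eq_of_mem _ _ _ hx
  have hfTC {x : X} (hx : x ∈ C) : f (T x) = x := by
    have hTx := mem_image_of_mem T hx
    simp only [f, piecewise_eq_of_notMem _ _ _ (hdisj.notMem_of_mem_right hTx),
      piecewise_eq_of_mem _ _ _ hTx, hST hx]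
  have hfid {x : X} (hx : x ∉ C) (hx' : x ∉ T '' C) : f x = x := by
    simp only [f, piecewise_eq_of_notMem _ _ _ hx, piecewise_eq_of_notMem _ _ _ hx', id]
  have trichotomy (x : X) : x ∈ C ∨ (∃ y ∈ C, T y = x) ∨ x ∉ C ∧ x ∉ T '' C := by
    rw [← mem_image]; tauto
  have hinv : f.Involutive := fun x => by
    rcases trichotomy x with hx | ⟨y, hy, rfl⟩ | ⟨hx, hx'⟩
    · rw [hfC hx, hfTC hx]
    · rw [hfTC hy, hfC hy]
    · rw [hfid hx hx', hfid hx hx']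
  have hf : Measurable f :=
    hT.piecewise hC (hS.piecewise (hC.image_of_measurable_injOn hT hinj) measurable_id)
  refine ⟨.ofInvolutive f hinv hf, fun x hx => hfC hx, fun x => ?_⟩
  change f x = x ∨ (x ∈ C ∧ f x = T x) ∨ (f x ∈ C ∧ T (f x) = x)
  rcases trichotomy x with hx | ⟨y, hy, rfl⟩ | ⟨hx, hx'⟩
  · exact .inr (.inl ⟨hx, hfC hx⟩)
  · rw [hfTC hy]
    exact .inr (.inr ⟨hy, rfl⟩)
  · exact .inl (hfid hx hx')

theorem exists_partition_eqOn_id_or_disjoint_image (hT : Measurable T) :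
    ∃ D : ℕ → Set X, (∀ n, MeasurableSet (D n)) ∧ Pairwise (Function.onFun Disjoint D) ∧
      ⋃ n, D n = univ ∧ ∀ n, EqOn T id (D n) ∨ Disjoint (D n) (T '' D n) := by
  let := upgradeStandardBorel X
  obtain ⟨U, hU⟩ := TopologicalSpace.exists_seq_basis X
  have hUn (n : ℕ) : MeasurableSet (U n) := (hU.isOpen (mem_range_self n)).measurableSet
  let D : ℕ → Set X := fun n => n.casesOn {x | T x = x} fun k => U k \ T ⁻¹' U k
  have hD (n : ℕ) : MeasurableSet (D n) := by
    cases n with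
    | zero => exact measurableSet_eq_fun hT measurable_id
    | succ k => exact (hUn k).diff (hT (hUn k))
  refine ⟨disjointed D, fun n => .disjointed hD n, disjoint_disjointed D, ?_, fun n => ?_⟩
  · refine iUnion_disjointed.trans (iUnion_eq_univ_iff.2 fun x => ?_)
    by_cases hx : T x = x
    · exact ⟨0, hx⟩
    obtain ⟨_, ⟨k, rfl⟩, hxk, hk⟩ :=
      hU.exists_subset_of_mem_open (mem_compl_singleton_iff.2 (Ne.symm hx)) isOpen_compl_singleton
    exact ⟨k + 1, hxk, fun hTx => hk hTx rfl⟩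
  · have hsub := disjointed_subset D n
    cases n with
    | zero => exact .inl fun x hx => hsub hx
    | succ k =>
      refine .inr (disjoint_left.2 ?_)
      rintro _ hx ⟨y, hy, rfl⟩
      exact (hsub hy).2 (hsub hx).1

variable {E : X → X → Prop} {ρ : X → X → ℝ} {μ : Measure X}

theorem exists_partition_measurableEquiv (hE : Equivalence E) {B : Set X} (hB : MeasurableSet B)
    (hT : Measurable T) (hinj : InjOn T B) (hTE : ∀ x ∈ B, E (T x) x) :
    ∃ D : ℕ → Set X, (∀ n, MeasurableSet (D n)) ∧ Pairwise (Function.onFun Disjoint D) ∧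
      ⋃ n, D n = B ∧ ∀ n, ∃ e : X ≃ᵐ X, (∀ x, E (e x) x) ∧ EqOn e T (D n) := by
  obtain ⟨D, hD, hdisj, hcover, hTD⟩ := exists_partition_eqOn_id_or_disjoint_image hT
  refine ⟨fun n => B ∩ D n, fun n => hB.inter (hD n),
    fun m n hmn => (hdisj hmn).mono inter_subset_right inter_subset_right, ?_, fun n => ?_⟩
  · rw [← inter_iUnion, hcover, inter_univ]
  rcases hTD n with hid | hdis
  · exact ⟨.refl X, hE.refl, fun x hx => (hid hx.2).symm⟩
  · obtain ⟨e, heT, he⟩ := exists_measurableEquiv_eqOn (hB.inter (hD n)) hT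
      (hinj.mono inter_subset_left)
      (hdis.mono inter_subset_right (image_mono inter_subset_right))
    refine ⟨e, fun x => ?_, heT⟩
    rcases he x with hx | ⟨hx, hex⟩ | ⟨hx, hex⟩
    · rw [hx]
      exact hE.refl x
    · rw [hex]
      exact hTE x hx.1
    · have h := hTE (e x) hx.1
      rw [hex] at h
      exact hE.symm h

theorem IsInvariant.isInvariantRel (hμ : IsInvariant E ρ μ) (hE : Equivalence E) :
    IsInvariantRel {p | E p.1 p.2} ρ μ := fun B T hB hT hinj hTE => by
  obtain ⟨D, hD, hdisj, rfl, he⟩ := exists_partition_measurableEquiv hE hB hT hinj hTE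
  have hDB (n : ℕ) : InjOn T (D n) := hinj.mono (subset_iUnion D n)
  have piece (n : ℕ) : μ (T '' D n) = ∫⁻ x in D n, ENNReal.ofReal (ρ (T x) x) ∂μ := by
    obtain ⟨e, heE, heT⟩ := he n
    rw [← heT.image_eq, hμ e heE _ (hD n)]
    exact setLIntegral_congr_fun (hD n) fun x hx => by rw [heT hx]
  have hdisjT : Pairwise (Function.onFun Disjoint fun n => T '' D n) := fun m n hmn =>
    (hdisj hmn).image hinj (subset_iUnion D m) (subset_iUnion D n)
  rw [image_iUnion, measure_iUnion hdisjT fun n => (hD n).image_of_measurable_injOn hT (hDB n),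
    lintegral_iUnion hD hdisj]
  exact tsum_congr piece

end PartialInjections

section Fibers

variable {E : X → X → Prop} {ρ : X → X → ℝ}

theorem eSize_iUnion {ι : Type*} {Y : ι → Set X} (hY : Pairwise (Function.onFun Disjoint Y))
    (z : X) : eSize ρ (⋃ i, Y i) z = ∑' i, eSize ρ (Y i) z :=
  ENNReal.tsum_biUnion (f := fun y => ENNReal.ofReal (ρ y z)) fun _ _ _ _ hij => hY hij

theorem eSize_inter_fiber_eq_indicator {B : Set X} {S T : X → X} (hST : LeftInvOn S T B) (z : X) :
    eSize ρ (B ∩ T ⁻¹' {z}) z =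
      (T '' B).indicator (fun z => ENNReal.ofReal (ρ (S z) z)) z := by
  by_cases hz : z ∈ T '' B
  · obtain ⟨x, hx, rfl⟩ := hz
    have hsing : B ∩ T ⁻¹' {T x} = {x} :=
      Subset.antisymm (fun y hy => hST.injOn hy.1 hx hy.2) (singleton_subset_iff.2 ⟨hx, rfl⟩)
    rw [indicator_of_mem (mem_image_of_mem T hx), hST hx, hsing, eSize, tsum_singleton x
      fun y => ENNReal.ofReal (ρ y (T x))]
  · have hempty : B ∩ T ⁻¹' {z} = ∅ := eq_empty_of_forall_notMem fun x hx => hz ⟨x, hx.1, hx.2⟩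
    rw [indicator_of_notMem hz, hempty, eSize, tsum_empty]

variable [MeasurableSpace X]

theorem IsCocycle.measurable_ofReal (hρ : IsCocycle E ρ) {T : X → X} (hT : Measurable T) :
    Measurable fun x => ENNReal.ofReal (ρ (T x) x) :=
  (hρ.1.comp (hT.prodMk measurable_id)).ennreal_ofReal

theorem IsCBER.exists_measurable_eq_of_rel (hE : IsCBER E) {σ : X → X} (hσ : Measurable σ) :
    ∃ ψ : X → X, Measurable ψ ∧ (∀ x, E x (ψ x)) ∧ ∀ x, E x (σ x) → ψ x = σ x := by
  classical
  refine ⟨fun x => if E x (σ x) then σ x else x,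
    .ite (hE.2.1.preimage (measurable_id.prodMk hσ)) hσ measurable_id, fun x => ?_,
    fun x hx => if_pos hx⟩
  by_cases hx : E x (σ x)
  · simpa only [if_pos hx] using hx
  · simpa only [if_neg hx] using hE.1.refl x

variable [StandardBorelSpace X] {μ : Measure X}

theorem IsInvariantRel.quasiMeasurePreserving [IsFiniteMeasure μ] (hE : IsCBER E)
    (hρ : IsCocycle E ρ) (hμ : IsInvariantRel {p | E p.1 p.2} ρ μ) {ψ : X → X}
    (hψ : Measurable ψ) (hψE : ∀ x, E x (ψ x)) : Measure.QuasiMeasurePreserving ψ μ μ := by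
  refine ⟨hψ, Measure.AbsolutelyContinuous.mk fun A hA hA0 => ?_⟩
  obtain ⟨B, hB, hinj, hcover⟩ := exists_seq_injOn_ae_mem μ hψ fun y =>
    (hE.2.2 y).mono fun x hx => hE.1.symm (mem_singleton_iff.1 hx ▸ hψE x)
  have piece (n : ℕ) : ∀ᵐ x ∂μ, x ∈ B n → ψ x ∉ A := by
    have hC : MeasurableSet (B n ∩ ψ ⁻¹' A) := (hB n).inter (hψ hA)
    have himage : μ (ψ '' (B n ∩ ψ ⁻¹' A)) = 0 :=
      measure_mono_null (image_subset_iff.2 inter_subset_right) hA0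
    rw [hμ _ ψ hC hψ ((hinj n).mono inter_subset_left) fun x _ => hE.1.symm (hψE x),
      setLIntegral_eq_zero_iff hC (hρ.measurable_ofReal hψ)] at himage
    filter_upwards [himage] with x hx hxB hxA
    exact (ENNReal.ofReal_pos.2 (hρ.2.1 (hE.1.symm (hψE x)))).ne' (hx ⟨hxB, hxA⟩)
  rw [Measure.map_apply hψ hA, measure_eq_zero_iff_ae_notMem]
  filter_upwards [hcover, ae_all_iff.2 piece] with x ⟨n, hn⟩ hx using hx n hn

theorem IsInvariantRel.ae_forall_rel [IsFiniteMeasure μ] (hE : IsCBER E) (hρ : IsCocycle E ρ)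
    (hμ : IsInvariantRel {p | E p.1 p.2} ρ μ) {P : X → Prop} (hP : ∀ᵐ x ∂μ, P x) :
    ∀ᵐ x ∂μ, ∀ y, E x y → P y := by
  obtain ⟨A, hPA, hA, hA0⟩ := exists_measurable_superset_of_null (ae_iff.1 hP)
  let R : Set (X × X) := {p | E p.1 p.2} ∩ Prod.snd ⁻¹' A
  suffices hR : μ (Prod.fst '' R) = 0 by
    filter_upwards [measure_eq_zero_iff_ae_notMem.1 hR] with x hx y hxy
    by_contra hy
    exact hx ⟨(x, y), ⟨hxy, hPA hy⟩, rfl⟩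
  by_contra hpos
  obtain ⟨B, σ, -, hB0, hσ, hσR⟩ :=
    exists_measurable_selection μ (hE.2.1.inter (measurable_snd hA)) hpos
  obtain ⟨ψ, hψ, hψE, hψσ⟩ := hE.exists_measurable_eq_of_rel hσ
  have hnull := (hμ.quasiMeasurePreserving hE hρ hψ hψE).preimage_null hA0
  refine hB0 (measure_mono_null (fun x hx => ?_) hnull)
  rw [mem_preimage, hψσ x (hσR x hx).1]
  exact (hσR x hx).2

theorem IsInvariantRel.measurable_and_lintegral_eSize_inter_fiber (hρ : IsCocycle E ρ)
    (hμ : IsInvariantRel {p | E p.1 p.2} ρ μ) {ψ : X → X} (hψ : Measurable ψ) {B : Set X}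
    (hB : MeasurableSet B) (hinj : InjOn ψ B) (hψE : ∀ x ∈ B, E x (ψ x)) :
    Measurable (fun z => eSize ρ (B ∩ ψ ⁻¹' {z}) z) ∧
      ∫⁻ z, eSize ρ (B ∩ ψ ⁻¹' {z}) z ∂μ = μ B := by
  obtain _ | _ := isEmpty_or_nonempty X
  · exact ⟨measurable_of_empty _, by simp [Measure.eq_zero_of_isEmpty μ]⟩
  obtain ⟨S, hS, hSψ⟩ := exists_measurable_leftInvOn hψ hB hinj
  have himage : MeasurableSet (ψ '' B) := hB.image_of_measurable_injOn hψ hinj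
  have hSE : ∀ z ∈ ψ '' B, E (S z) z := by
    rintro _ ⟨x, hx, rfl⟩
    rw [hSψ hx]
    exact hψE x hx
  have hinv := hμ (ψ '' B) S himage hS hSψ.rightInvOn_image.injOn hSE
  rw [hSψ.image_image] at hinv
  simp only [eSize_inter_fiber_eq_indicator hSψ]
  exact ⟨(hρ.measurable_ofReal hS).indicator himage, by rw [lintegral_indicator himage, hinv]⟩

theorem IsInvariantRel.aemeasurable_and_lintegral_eSize_fiber_of_measurable [IsFiniteMeasure μ]
    (hE : IsCBER E) (hρ : IsCocycle E ρ) (hμ : IsInvariantRel {p | E p.1 p.2} ρ μ) {ψ : X → X}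
    (hψ : Measurable ψ) (hψE : ∀ x, E x (ψ x)) :
    AEMeasurable (fun z => eSize ρ (ψ ⁻¹' {z}) z) μ ∧
      ∫⁻ z, eSize ρ (ψ ⁻¹' {z}) z ∂μ = μ univ := by
  obtain ⟨B, hB, hinj, hcover⟩ := exists_seq_injOn_ae_mem μ hψ fun y =>
    (hE.2.2 y).mono fun x hx => hE.1.symm (mem_singleton_iff.1 hx ▸ hψE x)
  have hD (n : ℕ) : MeasurableSet (disjointed B n) := .disjointed hB n
  have piece (n : ℕ) := hμ.measurable_and_lintegral_eSize_inter_fiber hρ hψ (hD n)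
    ((hinj n).mono (disjointed_subset B n)) fun x _ => hψE x
  have hsum : (fun z => eSize ρ (ψ ⁻¹' {z}) z) =ᵐ[μ]
      fun z => ∑' n, eSize ρ (disjointed B n ∩ ψ ⁻¹' {z}) z := by
    filter_upwards [hμ.ae_forall_rel hE hρ hcover] with z hz
    rw [← eSize_iUnion, ← iUnion_inter, iUnion_disjointed, inter_eq_right.2]
    · exact fun x hx => mem_iUnion.2 (hz x (hE.1.symm (mem_singleton_iff.1 hx ▸ hψE x)))
    · exact fun m n hmn =>
        (disjoint_disjointed B hmn).mono inter_subset_left inter_subset_left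
  refine ⟨(Measurable.tsum fun n => (piece n).1).aemeasurable.congr hsum.symm, ?_⟩
  rw [lintegral_congr_ae hsum, lintegral_tsum fun n => (piece n).1.aemeasurable]
  simp only [(piece _).2]
  rw [← measure_iUnion (disjoint_disjointed B) hD, iUnion_disjointed]
  exact measure_congr (Filter.eventuallyEq_univ.2 (hcover.mono fun x hx => mem_iUnion.2 hx))

theorem IsInvariantRel.aemeasurable_and_lintegral_eSize_fiber [IsFiniteMeasure μ] (hE : IsCBER E)
    (hρ : IsCocycle E ρ) (hμ : IsInvariantRel {p | E p.1 p.2} ρ μ) {ψ : X → X}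
    (hψ : AEMeasurable ψ μ) (hψE : ∀ x, E x (ψ x)) :
    AEMeasurable (fun z => eSize ρ (ψ ⁻¹' {z}) z) μ ∧
      ∫⁻ z, eSize ρ (ψ ⁻¹' {z}) z ∂μ = μ univ := by
  obtain ⟨ψ', hψ', hψ'E, hψ'ψ⟩ := hE.exists_measurable_eq_of_rel hψ.measurable_mk
  have heq : ∀ᵐ x ∂μ, ψ x = ψ' x := by
    filter_upwards [hψ.ae_eq_mk] with x hx
    rw [hψ'ψ x (hx ▸ hψE x), hx]
  have hfiber : (fun z => eSize ρ (ψ' ⁻¹' {z}) z) =ᵐ[μ] fun z => eSize ρ (ψ ⁻¹' {z}) z := by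
    filter_upwards [hμ.ae_forall_rel hE hρ heq] with z hz
    congr 1
    ext x
    exact ⟨fun hx => (hz x (hE.1.symm (mem_singleton_iff.1 hx ▸ hψ'E x))).trans hx,
      fun hx => (hz x (hE.1.symm (mem_singleton_iff.1 hx ▸ hψE x))).symm.trans hx⟩
  obtain ⟨hmeas, hint⟩ := hμ.aemeasurable_and_lintegral_eSize_fiber_of_measurable hE hρ hψ' hψ'E
  exact ⟨hmeas.congr hfiber, (lintegral_congr_ae hfiber).symm.trans hint⟩

end Fibers

section RelativeSize

theorem eSize_ne_top {ρ : X → X → ℝ} {Y : Set X} (hY : Y.Finite) (x : X) : eSize ρ Y x ≠ ⊤ := by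
  have := hY.fintype
  rw [eSize, tsum_fintype]
  exact ENNReal.sum_ne_top.2 fun _ _ => ofReal_ne_top

variable [MeasurableSpace X] {E : X → X → Prop} {ρ : X → X → ℝ} {Y Z : Set X} {x z : X}

theorem IsCocycle.eSize_eq_mul_s10 (hρ : IsCocycle E ρ) (hxz : E x z)
    (hY : ∀ y ∈ Y, E y x) : eSize ρ Y z = eSize ρ Y x * ENNReal.ofReal (ρ x z) := by
  rw [eSize, eSize, ← ENNReal.tsum_mul_right]
  refine tsum_congr fun y => ?_
  rw [hρ.2.2 (hY y y.2) hxz, ENNReal.ofReal_mul (hρ.2.1 (hY y y.2)).le]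

theorem IsCocycle.relSize_eq_relSize (hρ : IsCocycle E ρ) (hxz : E x z)
    (hY : ∀ y ∈ Y, E y x) (hZ : ∀ y ∈ Z, E y x) : relSize ρ Y Z z = relSize ρ Y Z x := by
  rw [relSize, relSize, hρ.eSize_eq_mul_s10 hxz hY, hρ.eSize_eq_mul_s10 hxz hZ]
  exact ENNReal.mul_div_mul_right _ _ (ENNReal.ofReal_pos.2 (hρ.2.1 hxz)).ne' ofReal_ne_top

theorem IsCocycle.eSize_ne_zero (hE : Equivalence E) (hρ : IsCocycle E ρ) (hx : x ∈ Y) :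
    eSize ρ Y x ≠ 0 := fun hzero =>
  (ENNReal.ofReal_pos.2 (hρ.2.1 (hE.refl x))).ne' (ENNReal.tsum_eq_zero.1 hzero ⟨x, hx⟩)

end RelativeSize

theorem exists_aemeasurable_transversal [MeasurableSpace X] [StandardBorelSpace X]
    (μ : Measure X) [IsFiniteMeasure μ] {F : X → X → Prop} (hF : Equivalence F)
    (hFmeas : MeasurableSet {p : X × X | F p.1 p.2}) (hfin : ∀ x, {y | F x y}.Finite) :
    ∃ t : X → X, AEMeasurable t μ ∧ (∀ x, F x (t x)) ∧ ∀ x y, F x y → t x = t y := by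
  let ι := embeddingReal X
  have hι : MeasurableEmbedding ι := measurableEmbedding_embeddingReal X
  choose t htF hmin using fun x => (hfin x).exists_minimalFor ι _ ⟨x, hF.refl x⟩
  replace hmin (x y : X) (hxy : F x y) : ι (t x) ≤ ι y :=
    (le_total (ι (t x)) (ι y)).elim id (hmin x hxy)
  refine ⟨t, NullMeasurable.aemeasurable ?_, htF, fun x y hxy => hι.injective ?_⟩
  · suffices hIic : ∀ q, NullMeasurableSet (ι ∘ t ⁻¹' Iic q) μ from
      hι.measurable_comp_iff.1 (measurable_of_Iic (δ := NullMeasurableSpace X μ) hIic)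
    intro q
    have hpre : ι ∘ t ⁻¹' Iic q = Prod.fst '' ({p | F p.1 p.2} ∩ Prod.snd ⁻¹' (ι ⁻¹' Iic q)) := by
      ext x
      refine ⟨fun hx => ⟨(x, t x), ⟨htF x, hx⟩, rfl⟩, ?_⟩
      rintro ⟨⟨x, y⟩, ⟨hxy, hy⟩, rfl⟩
      exact mem_Iic.2 ((hmin x y hxy).trans hy)
    rw [hpre]
    exact nullMeasurableSet_image μ measurable_fst
      (hFmeas.inter (measurable_snd (hι.measurable measurableSet_Iic)))
  · exact le_antisymm (hmin x _ (hF.trans hxy (htF y))) (hmin y _ (hF.trans (hF.symm hxy) (htF x)))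

section Compression

variable [MeasurableSpace X] {E F : X → X → Prop} {ρ : X → X → ℝ} {φ : X → X}

theorem IsFinSubequiv.finite_setOf_rel (hF : IsFinSubequiv E F) (x : X) :
    {y | F y x}.Finite :=
  (hF.2.2.2 x).subset fun _ hy => hF.1.symm hy

theorem CompressionOver.eSize_preimage_le (hE : Equivalence E) (hρ : IsCocycle E ρ)
    (hF : IsFinSubequiv E F) (hcomp : CompressionOver E F ρ φ) (x : X) :
    eSize ρ (φ ⁻¹' {y | F y x}) x ≤ eSize ρ {y | F y x} x := by
  have hzero : eSize ρ {y | F y x} x ≠ 0 := hρ.eSize_ne_zero hE (hF.1.refl x)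
  have hle := hcomp.2.1 x
  rwa [relSize, ENNReal.div_le_iff hzero (eSize_ne_top (hF.finite_setOf_rel x) x), one_mul] at hle

theorem CompressionOver.eSize_fiber_comp_le (hE : Equivalence E) (hρ : IsCocycle E ρ)
    (hF : IsFinSubequiv E F) (hcomp : CompressionOver E F ρ φ) {t : X → X}
    (ht : ∀ x y, F x y ↔ t x = t y) (htF : ∀ x, F x (t x)) (z : X) :
    eSize ρ (t ∘ φ ⁻¹' {z}) z ≤ eSize ρ (t ⁻¹' {z}) z := by
  by_cases hz : t z = z
  · have hclass : {y | F y z} = t ⁻¹' {z} := by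
      ext y
      rw [mem_ofPred_eq, ht, hz, mem_preimage, mem_singleton_iff]
    rw [preimage_comp, ← hclass]
    exact hcomp.eSize_preimage_le hE hρ hF z
  · have hempty : t ∘ φ ⁻¹' {z} = ∅ := eq_empty_of_forall_notMem fun x hx =>
      hz (mem_singleton_iff.1 hx ▸ ((ht _ _).1 (htF (φ x))).symm)
    rw [hempty, eSize, tsum_empty]
    exact zero_le

theorem CompressionOver.ae_relSize_preimage_eq_one [StandardBorelSpace X] {μ : Measure X}
    [IsFiniteMeasure μ] (hE : IsCBER E) (hρ : IsCocycle E ρ) (hF : IsFinSubequiv E F)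
    (hφ : Measurable φ) (hcomp : CompressionOver E F ρ φ)
    (hμ : IsInvariantRel {p | E p.1 p.2} ρ μ) :
    ∀ᵐ x ∂μ, relSize ρ (φ ⁻¹' {y | F y x}) {y | F y x} x = 1 := by
  obtain ⟨t, htmeas, htF, htconst⟩ := exists_aemeasurable_transversal μ hF.1 hF.2.1 hF.2.2.2
  have ht (x y : X) : F x y ↔ t x = t y :=
    ⟨htconst x y, fun h => hF.1.trans (htF x) (h ▸ hF.1.symm (htF y))⟩
  have hsub {x y : X} (h : F x y) : E x y := hF.2.2.1 h
  have htφmeas : AEMeasurable (t ∘ φ) μ :=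
    htmeas.comp_quasiMeasurePreserving (hμ.quasiMeasurePreserving hE hρ hφ hcomp.1)
  obtain ⟨-, hint⟩ := hμ.aemeasurable_and_lintegral_eSize_fiber hE hρ htφmeas fun x =>
    hE.1.trans (hcomp.1 x) (hsub (htF (φ x)))
  obtain ⟨hmeas', hint'⟩ := hμ.aemeasurable_and_lintegral_eSize_fiber hE hρ htmeas fun x =>
    hsub (htF x)
  have heq : (fun z => eSize ρ (t ∘ φ ⁻¹' {z}) z) =ᵐ[μ] fun z => eSize ρ (t ⁻¹' {z}) z :=
    ae_eq_of_ae_le_of_lintegral_le (ae_of_all μ (hcomp.eSize_fiber_comp_le hE.1 hρ hF ht htF))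
      (hint ▸ measure_ne_top μ univ) hmeas' (hint'.trans hint.symm).le
  filter_upwards [hμ.ae_forall_rel hE hρ heq] with x hx
  have hclass : {y | F y x} = t ⁻¹' {t x} := Set.ext fun y => ht y x
  have hone : relSize ρ (φ ⁻¹' {y | F y x}) {y | F y x} (t x) = 1 := by
    rw [relSize, hclass, ← preimage_comp, hx (t x) (hsub (htF x)), ← hclass]
    exact ENNReal.div_self (hρ.eSize_ne_zero hE.1 (hF.1.symm (htF x)))
      (eSize_ne_top (hF.finite_setOf_rel x) _)
  rw [← hone]
  exact (hρ.relSize_eq_relSize (hsub (htF x))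
    (fun y hy => hE.1.trans (hcomp.1 y) (hsub hy)) fun y hy => hsub hy).symm

end Compression

/-- If there is a Borel compression of `ρ` over a finite Borel subequivalence relation of `E`,
then there is no `ρ`-invariant Borel probability measure. -/
theorem stmt10 [MeasurableSpace X] [StandardBorelSpace X]
    (E : X → X → Prop) (hE : IsCBER E)
    (ρ : X → X → ℝ) (hρ : IsCocycle E ρ)
    (F : X → X → Prop) (hF : IsFinSubequiv E F)
    (φ : X → X) (hφ : Measurable φ) (hcomp : CompressionOver E F ρ φ) :
    ¬ ∃ μ : Measure X, IsProbabilityMeasure μ ∧ IsInvariant E ρ μ := by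
  rintro ⟨μ, hprob, hμ⟩
  have hμE := hμ.isInvariantRel hE.1
  obtain ⟨x, hx⟩ := (hμE.ae_forall_rel hE hρ
    (hcomp.ae_relSize_preimage_eq_one hE hρ hF hφ hμE)).exists
  obtain ⟨y, hxy, hy⟩ := hcomp.2.2 x
  exact hy.ne (hx y hxy)

end CocycleNadkarni
end
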